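/- Let X ∈ Sⁿ with distinct eigenvalues μ₁ > … > μ_r and index blocks α₁,…,α_r, fix m ∈ {1,…,r}, and let i = min α_m (so that either i = 1 or λ_{i−1}(X) > λᵢ(X)). Consider the i-th largest eigenvalue function λᵢ : Sⁿ → ℝ. Then: (a) for every H ∈ Sⁿ and every U ∈ Oⁿ(X), dλᵢ(X)(H) = λ₁(U_{α_m}ᵀ·H·U_{α_m}), the largest eigenvalue of U_{α_m}ᵀHU_{α_m}, and this coincides with the one-sided directional derivative lim_{t↓0}[λᵢ(X+tH)−λᵢ(X)]/t; (b) λᵢ is subdifferentially regular at X; (c) ∂λᵢ(X) = { U_{α_m}·Diag(z)·U_{α_m}ᵀ : U ∈ Oⁿ(X), z ∈ ℝ^{|α_m|}, z_j ≥ 0 for all j, ∑_j z_j = 1 }. -/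

import Mathlib

open Filter Topology Matrix

noncomputable section

namespace SpecPaper

/-! ## Generic variational analysis definitions over a topological real vector space -/

variable {E : Type*}

section Generic

variable [AddCommGroup E] [Module ℝ E] [TopologicalSpace E]

/-- `f x` is finite (neither `+∞` nor `-∞`). -/
def IsFiniteAt (f : E → EReal) (x : E) : Prop :=
  f x ≠ ⊤ ∧ f x ≠ ⊥

/-- The norm induced by a given inner product. -/
noncomputable def nrm (ip : E → E → ℝ) (x : E) : ℝ :=
  Real.sqrt (ip x x)

/-- The subderivative `df(x)(w)`. -/
noncomputable def subderiv (f : E → EReal) (x w : E) : EReal :=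
  Filter.liminf (fun p : ℝ × E => (((p.1)⁻¹ : ℝ) : EReal) * (f (x + p.1 • p.2) - f x))
    ((nhdsWithin (0 : ℝ) (Set.Ioi 0)) ×ˢ nhds w)

/-- The second-order difference quotient `Δ²ₜ f(x,v)(w)`. -/
noncomputable def sdq2 (ip : E → E → ℝ) (f : E → EReal) (x v : E) (t : ℝ) (w : E) : EReal :=
  (((2 / t ^ 2) : ℝ) : EReal) * (f (x + t • w) - f x - ((t * ip v w : ℝ) : EReal))

/-- The second subderivative `d²f(x,v)(w)`. -/
noncomputable def subderiv2 (ip : E → E → ℝ) (f : E → EReal) (x v w : E) : EReal :=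
  Filter.liminf (fun p : ℝ × E => sdq2 ip f x v p.1 p.2)
    ((nhdsWithin (0 : ℝ) (Set.Ioi 0)) ×ˢ nhds w)

/-- Twice epi-differentiability of `f` at `x` for `v`. -/
def TwiceEpiDiff (ip : E → E → ℝ) (f : E → EReal) (x v : E) : Prop :=
  IsFiniteAt f x ∧
    ∀ t : ℕ → ℝ, (∀ k, 0 < t k) → Tendsto t atTop (nhds 0) →
      ∀ w : E, ∃ ws : ℕ → E, Tendsto ws atTop (nhds w) ∧
        Tendsto (fun k => sdq2 ip f x v (t k) (ws k)) atTop (nhds (subderiv2 ip f x v w))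

/-- `v` is a regular subgradient of `f` at `x`. -/
def RegSubgrad (ip : E → E → ℝ) (f : E → EReal) (x v : E) : Prop :=
  IsFiniteAt f x ∧
    (0 : EReal) ≤ Filter.liminf
      (fun y : E =>
        (((nrm ip (y - x))⁻¹ : ℝ) : EReal) * (f y - f x - ((ip v (y - x) : ℝ) : EReal)))
      (nhdsWithin x {x}ᶜ)

/-- `v` is a (limiting) subgradient of `f` at `x`. -/
def LimSubgrad (ip : E → E → ℝ) (f : E → EReal) (x v : E) : Prop :=
  ∃ xs vs : ℕ → E, (∀ k, RegSubgrad ip f (xs k) (vs k)) ∧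
    Tendsto xs atTop (nhds x) ∧ Tendsto vs atTop (nhds v) ∧
    Tendsto (fun k => f (xs k)) atTop (nhds (f x))

/-- The tangent cone to `C` at `x`. -/
def tangentCone (C : Set E) (x : E) : Set E :=
  {w | ∃ (t : ℕ → ℝ) (ws : ℕ → E), (∀ k, 0 < t k) ∧ Tendsto t atTop (nhds 0) ∧
    Tendsto ws atTop (nhds w) ∧ ∀ k, x + t k • ws k ∈ C}

/-- The regular normal cone to `C` at `x`. -/
def regNormalCone (ip : E → E → ℝ) (C : Set E) (x : E) : Set E :=
  {v | ∀ w ∈ tangentCone C x, ip v w ≤ 0}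

/-- The limiting normal cone to `C` at `x`. -/
def limNormalCone (ip : E → E → ℝ) (C : Set E) (x : E) : Set E :=
  {v | ∃ xs vs : ℕ → E, (∀ k, xs k ∈ C) ∧ (∀ k, vs k ∈ regNormalCone ip C (xs k)) ∧
    Tendsto xs atTop (nhds x) ∧ Tendsto vs atTop (nhds v)}

/-- The critical cone `C_f(x,v)`. -/
def criticalCone (ip : E → E → ℝ) (f : E → EReal) (x v : E) : Set E :=
  {w | subderiv f x w = ((ip v w : ℝ) : EReal)}

/-- `f` is locally Lipschitz continuous at `x` relative to its domain. -/
def LocLipAtRelDom (ip : E → E → ℝ) (f : E → EReal) (x : E) : Prop :=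
  IsFiniteAt f x ∧
    ∃ V ∈ nhds x, ∃ ℓ : ℝ, 0 ≤ ℓ ∧
      ∀ a ∈ V, ∀ b ∈ V, f a ≠ ⊤ → f b ≠ ⊤ →
        f a ≠ ⊥ ∧ f b ≠ ⊥ ∧ |(f a).toReal - (f b).toReal| ≤ ℓ * nrm ip (a - b)

/-- `f` is locally Lipschitz continuous relative to its domain. -/
def LocLipRelDom (ip : E → E → ℝ) (f : E → EReal) : Prop :=
  ∀ x : E, f x ≠ ⊤ → LocLipAtRelDom ip f x

/-- `v` is a proximal subgradient of `f` at `x`. -/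
def ProxSubgrad (ip : E → E → ℝ) (f : E → EReal) (x v : E) : Prop :=
  IsFiniteAt f x ∧
    ∃ r > (0 : ℝ), ∃ ε > (0 : ℝ), ∀ x' : E, nrm ip (x' - x) ≤ ε →
      f x + ((ip v (x' - x) - r / 2 * ip (x' - x) (x' - x) : ℝ) : EReal) ≤ f x'

/-- `f` is prox-regular at `x` for `v`. -/
def ProxRegularAtFor (ip : E → E → ℝ) (f : E → EReal) (x v : E) : Prop :=
  IsFiniteAt f x ∧
    (∃ δ > (0 : ℝ), LowerSemicontinuousOn f {x' | nrm ip (x' - x) < δ}) ∧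
    ∃ ε > (0 : ℝ), ∃ r : ℝ, 0 ≤ r ∧
      ∀ x₁ v₁ : E, LimSubgrad ip f x₁ v₁ → nrm ip (x₁ - x) < ε → nrm ip (v₁ - v) < ε →
        f x₁ < f x + (ε : EReal) →
        ∀ x' : E, nrm ip (x' - x) < ε →
          f x₁ + ((ip v₁ (x' - x₁) - r / 2 * ip (x' - x₁) (x' - x₁) : ℝ) : EReal) ≤ f x'

/-- `f` is prox-regular at `x` (for every subgradient). -/
def ProxRegularAt (ip : E → E → ℝ) (f : E → EReal) (x : E) : Prop :=
  ∀ v : E, LimSubgrad ip f x v → ProxRegularAtFor ip f x v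

/-- `f` is subdifferentially continuous at `x`. -/
def SubdiffContAt (ip : E → E → ℝ) (f : E → EReal) (x : E) : Prop :=
  ∀ v : E, LimSubgrad ip f x v →
    ∀ xs vs : ℕ → E, (∀ k, LimSubgrad ip f (xs k) (vs k)) →
      Tendsto xs atTop (nhds x) → Tendsto vs atTop (nhds v) →
      Tendsto (fun k => f (xs k)) atTop (nhds (f x))

/-- `f` is prox-bounded. -/
def ProxBounded (ip : E → E → ℝ) (f : E → EReal) : Prop :=
  ∃ α c : ℝ, ∀ x : E, (c : EReal) ≤ f x + ((α * ip x x : ℝ) : EReal)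

/-- The proximal mapping (as a set of minimizers). -/
def proxSet (ip : E → E → ℝ) (f : E → EReal) (γ : ℝ) (x : E) : Set E :=
  {w | ∀ w' : E,
    f w + ((1 / (2 * γ) * ip (w - x) (w - x) : ℝ) : EReal) ≤
      f w' + ((1 / (2 * γ) * ip (w' - x) (w' - x) : ℝ) : EReal)}

/-- The proximal map of `f` with parameter `γ` is single-valued around `z` and the resulting
map is directionally differentiable at `z`. -/
def ProxSingleDirDiff (ip : E → E → ℝ) (f : E → EReal) (γ : ℝ) (z : E) : Prop :=
  ∃ V ∈ nhds z, ∃ P : E → E, (∀ u ∈ V, proxSet ip f γ u = {P u}) ∧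
    ∀ h : E, ∃ L : E,
      Tendsto (fun t : ℝ => t⁻¹ • (P (z + t • h) - P z)) (nhdsWithin 0 (Set.Ioi 0)) (nhds L)

/-- The parabolic difference quotient. -/
noncomputable def parabQuot (f : E → EReal) (x w : E) (t : ℝ) (z : E) : EReal :=
  (((2 / t ^ 2) : ℝ) : EReal) *
    (f (x + t • w + (t ^ 2 / 2) • z) - f x - ((t * (subderiv f x w).toReal : ℝ) : EReal))

/-- The parabolic subderivative `d²f(x)(w | z)`. -/
noncomputable def parabSubderiv (f : E → EReal) (x w z : E) : EReal :=
  Filter.liminf (fun p : ℝ × E => parabQuot f x w p.1 p.2)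
    ((nhdsWithin (0 : ℝ) (Set.Ioi 0)) ×ˢ nhds z)

/-- `f` is parabolically epi-differentiable at `x` for `w`. -/
def ParabEpiDiff (f : E → EReal) (x w : E) : Prop :=
  (∃ z : E, parabSubderiv f x w z < ⊤) ∧
    ∀ t : ℕ → ℝ, (∀ k, 0 < t k) → Tendsto t atTop (nhds 0) →
      ∀ z : E, ∃ zs : ℕ → E, Tendsto zs atTop (nhds z) ∧
        Tendsto (fun k => parabQuot f x w (t k) (zs k)) atTop (nhds (parabSubderiv f x w z))

/-- `φ` is a generalized quadratic form: its domain is a linear subspace and on the domain it is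
given by a symmetric linear operator. -/
def IsGQF (ip : E → E → ℝ) (φ : E → EReal) : Prop :=
  (φ 0 ≠ ⊤) ∧
  (∀ x y : E, φ x ≠ ⊤ → φ y ≠ ⊤ → φ (x + y) ≠ ⊤) ∧
  (∀ (c : ℝ) (x : E), φ x ≠ ⊤ → φ (c • x) ≠ ⊤) ∧
  ∃ L : E → E,
    (∀ x y : E, φ x ≠ ⊤ → φ y ≠ ⊤ → L (x + y) = L x + L y) ∧
    (∀ (c : ℝ) (x : E), φ x ≠ ⊤ → L (c • x) = c • L x) ∧
    (∀ x y : E, φ x ≠ ⊤ → φ y ≠ ⊤ → ip (L x) y = ip x (L y)) ∧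
    (∀ x : E, φ x ≠ ⊤ → φ x = ((ip (L x) x : ℝ) : EReal))

/-- `f` is generalized twice differentiable at `x` for `v`. -/
def GenTwiceDiff (ip : E → E → ℝ) (f : E → EReal) (x v : E) : Prop :=
  TwiceEpiDiff ip f x v ∧ IsGQF ip (subderiv2 ip f x v)

/-- Proto-differentiability of a set-valued map `F` at `x` for `y ∈ F x`. -/
def ProtoDiff (F : E → Set E) (x y : E) : Prop :=
  ∀ w η : E, (w, η) ∈ tangentCone {p : E × E | p.2 ∈ F p.1} (x, y) →
    ∀ t : ℕ → ℝ, (∀ k, 0 < t k) → Tendsto t atTop (nhds 0) →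
      ∃ ws ηs : ℕ → E, Tendsto ws atTop (nhds w) ∧ Tendsto ηs atTop (nhds η) ∧
        ∀ k, y + t k • ηs k ∈ F (x + t k • ws k)

/-- Relative interior of a set (interior relative to its affine hull). -/
def relInterior (C : Set E) : Set E :=
  {y | y ∈ C ∧ ∃ V ∈ nhds y, ∀ z ∈ V, z ∈ affineSpan ℝ C → z ∈ C}

/-- A polyhedral set: the intersection of finitely many closed half-spaces. -/
def IsPolyhedral (ip : E → E → ℝ) (C : Set E) : Prop :=
  ∃ (k : ℕ) (a : Fin k → E) (b : Fin k → ℝ), C = {x | ∀ j : Fin k, ip (a j) x ≤ b j}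

/-- The subdifferential of a convex function. -/
def convexSubdiff (ip : E → E → ℝ) (f : E → EReal) (x : E) : Set E :=
  {v | ∀ z : E, f x + ((ip v (z - x) : ℝ) : EReal) ≤ f z}

/-- The natural inner product on `E × ℝ`. -/
def ipProd (ip : E → E → ℝ) : E × ℝ → E × ℝ → ℝ :=
  fun p q => ip p.1 q.1 + p.2 * q.2

/-- The epigraph of `f`. -/
def epiSet (f : E → EReal) : Set (E × ℝ) :=
  {p | f p.1 ≤ (p.2 : EReal)}

/-- `f` is subdifferentially regular at `x`. -/
def SubdiffRegularAt (ip : E → E → ℝ) (f : E → EReal) (x : E) : Prop :=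
  IsFiniteAt f x ∧
    regNormalCone (ipProd ip) (epiSet f) (x, (f x).toReal) =
      limNormalCone (ipProd ip) (epiSet f) (x, (f x).toReal)

/-! Real-valued versions: semidifferentiability, gradients. -/

/-- `f` is semidifferentiable at `x`. -/
def SemiDiffAt (f : E → ℝ) (x : E) : Prop :=
  ∀ w : E, ∃ d : ℝ,
    Tendsto (fun p : ℝ × E => (p.1)⁻¹ * (f (x + p.1 • p.2) - f x))
      ((nhdsWithin (0 : ℝ) (Set.Ioi 0)) ×ˢ nhds w) (nhds d)

/-- The (real value of the) subderivative of a real-valued function. -/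
noncomputable def dReal (f : E → ℝ) (x w : E) : ℝ :=
  (subderiv (fun y => ((f y : ℝ) : EReal)) x w).toReal

/-- The second-order difference quotient built from the subderivative. -/
noncomputable def sdq2R (f : E → ℝ) (x : E) (t : ℝ) (w : E) : ℝ :=
  (2 / t ^ 2) * (f (x + t • w) - f x - t * dReal f x w)

/-- `f` is twice semidifferentiable at `x`. -/
def TwiceSemiDiffAt (f : E → ℝ) (x : E) : Prop :=
  SemiDiffAt f x ∧
    ∀ w : E, ∃ d : ℝ,
      Tendsto (fun p : ℝ × E => sdq2R f x p.1 p.2)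
        ((nhdsWithin (0 : ℝ) (Set.Ioi 0)) ×ˢ nhds w) (nhds d)

/-- The second semiderivative `d²f(x)(w)` (the liminf; it is the full limit whenever `f` is
twice semidifferentiable at `x`). -/
noncomputable def secondSemiDeriv (f : E → ℝ) (x w : E) : EReal :=
  Filter.liminf (fun p : ℝ × E => ((sdq2R f x p.1 p.2 : ℝ) : EReal))
    ((nhdsWithin (0 : ℝ) (Set.Ioi 0)) ×ˢ nhds w)

/-- `f` is (Fréchet) differentiable at `x` with gradient `g` (w.r.t. inner product `ip`). -/
def HasGradAt (ip : E → E → ℝ) (f : E → ℝ) (x g : E) : Prop :=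
  Tendsto (fun y : E => (nrm ip (y - x))⁻¹ * (f y - f x - ip g (y - x)))
    (nhdsWithin x {x}ᶜ) (nhds 0)

/-- `f` is locally Lipschitz continuous around `x`. -/
def LocLipAt (ip : E → E → ℝ) (f : E → ℝ) (x : E) : Prop :=
  ∃ V ∈ nhds x, ∃ ℓ : ℝ, 0 ≤ ℓ ∧ ∀ a ∈ V, ∀ b ∈ V, |f a - f b| ≤ ℓ * nrm ip (a - b)

/-- `f` is twice differentiable at `x` with gradient map `G` near `x` and second derivative
(the derivative of `G` at `x`) given by the linear map `Dxx`. -/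
def HasSecondDerivAt (ip : E → E → ℝ) (f : E → EReal) (x : E) (G : E → E) (Dxx : E → E) :
    Prop :=
  ∃ V ∈ nhds x, ∃ fr : E → ℝ,
    (∀ z ∈ V, f z = ((fr z : ℝ) : EReal)) ∧
    (∀ z ∈ V, HasGradAt ip fr z (G z)) ∧
    IsLinearMap ℝ Dxx ∧
    Tendsto (fun z : E => (nrm ip (z - x))⁻¹ • (G z - G x - Dxx (z - x)))
      (nhdsWithin x {x}ᶜ) (nhds 0)

/-- `f` is twice differentiable at `x`. -/
def TwiceDiffAt (ip : E → E → ℝ) (f : E → EReal) (x : E) : Prop :=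
  ∃ G Dxx : E → E, HasSecondDerivAt ip f x G Dxx

end Generic

/-! ## Eigenvalues and spectral machinery -/

open scoped Classical in
/-- The eigenvalues of a real symmetric matrix, arranged in nonincreasing order
(junk value `0` if the matrix is not symmetric). -/
noncomputable def eigval {n : ℕ} (X : Matrix (Fin n) (Fin n) ℝ) : Fin n → ℝ :=
  if h : X.IsHermitian then
    fun i => h.eigenvalues (Tuple.sort (fun j => -h.eigenvalues j) i)
  else 0

/-- `Oⁿ(X)`: orthogonal matrices realizing the ordered spectral decomposition of `X`. -/
def eigOrth {n : ℕ} (X : Matrix (Fin n) (Fin n) ℝ) : Set (Matrix (Fin n) (Fin n) ℝ) :=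
  {U | U * Uᵀ = 1 ∧ X = U * Matrix.diagonal (eigval X) * Uᵀ}

open scoped Classical in
/-- The block `α_m` of indices `j` whose eigenvalue `λ_j(X)` equals `λ_i(X)`. -/
noncomputable def blockSet {n : ℕ} (X : Matrix (Fin n) (Fin n) ℝ) (i : Fin n) :
    Finset (Fin n) :=
  Finset.univ.filter fun j => eigval X j = eigval X i

lemma mem_blockSet_self {n : ℕ} (X : Matrix (Fin n) (Fin n) ℝ) (i : Fin n) :
    i ∈ blockSet X i := by
  simp [blockSet]

/-- The increasing enumeration of the block of `i`. -/
noncomputable def blockEmb {n : ℕ} (X : Matrix (Fin n) (Fin n) ℝ) (i : Fin n) :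
    Fin (blockSet X i).card → Fin n :=
  fun a => ((blockSet X i).orderIsoOfFin rfl a : Fin n)

/-- The position of `i` inside its own block. -/
noncomputable def blockIdx {n : ℕ} (X : Matrix (Fin n) (Fin n) ℝ) (i : Fin n) :
    Fin (blockSet X i).card :=
  ((blockSet X i).orderIsoOfFin rfl).symm ⟨i, mem_blockSet_self X i⟩

/-- The principal submatrix of `M` corresponding to the block of `i` (for `X`). -/
noncomputable def blockMat {n : ℕ} (X M : Matrix (Fin n) (Fin n) ℝ) (i : Fin n) :
    Matrix (Fin (blockSet X i).card) (Fin (blockSet X i).card) ℝ :=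
  Matrix.of fun a b => M (blockEmb X i a) (blockEmb X i b)

/-- The directional derivative `λ'(X;H)` of the ordered eigenvalue map, computed through
`U ∈ Oⁿ(X)`: blockwise ordered eigenvalues of `U_{α_m}ᵀ H U_{α_m}`. -/
noncomputable def lambdaDir {n : ℕ} (X U H : Matrix (Fin n) (Fin n) ℝ) : Fin n → ℝ :=
  fun i => eigval (blockMat X (Uᵀ * H * U) i) (blockIdx X i)

open scoped Classical in
/-- The Moore–Penrose pseudoinverse of a square real matrix, characterized by the four
Penrose equations. -/
noncomputable def pinv {n : ℕ} (A : Matrix (Fin n) (Fin n) ℝ) :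
    Matrix (Fin n) (Fin n) ℝ :=
  if h : ∃ B : Matrix (Fin n) (Fin n) ℝ,
      A * B * A = A ∧ B * A * B = B ∧ (A * B)ᵀ = A * B ∧ (B * A)ᵀ = B * A
  then h.choose else 0

/-- The curvature term `2 ∑ₘ ⟨Diag(y)_{αₘαₘ}, U_{αₘ}ᵀ H (μₘ I - X)† H U_{αₘ}⟩`, written as a
single sum over all indices. -/
noncomputable def curvTerm {n : ℕ} (X U H : Matrix (Fin n) (Fin n) ℝ) (y : Fin n → ℝ) : ℝ :=
  2 * ∑ i : Fin n, y i *
    (Uᵀ * (H * pinv (eigval X i • (1 : Matrix (Fin n) (Fin n) ℝ) - X) * H) * U) i i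

/-- Two symmetric matrices admit a simultaneous ordered spectral decomposition. -/
def simOrdSpec {k : ℕ} (A B : Matrix (Fin k) (Fin k) ℝ) : Prop :=
  ∃ P : Matrix (Fin k) (Fin k) ℝ, P * Pᵀ = 1 ∧
    A = P * Matrix.diagonal (eigval A) * Pᵀ ∧
    B = P * Matrix.diagonal (eigval B) * Pᵀ

/-- The subspace of symmetric `n × n` real matrices. -/
def symSubmodule (n : ℕ) : Submodule ℝ (Matrix (Fin n) (Fin n) ℝ) where
  carrier := {A | A.IsSymm}
  add_mem' := by
    intro a b ha hb
    simp only [Set.mem_setOf_eq, Matrix.IsSymm] at *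
    rw [Matrix.transpose_add, ha, hb]
  zero_mem' := by
    simp only [Set.mem_setOf_eq, Matrix.IsSymm, Matrix.transpose_zero]
  smul_mem' := by
    intro c a ha
    simp only [Set.mem_setOf_eq, Matrix.IsSymm] at *
    rw [Matrix.transpose_smul, ha]

/-- The space `Sⁿ` of symmetric `n × n` real matrices. -/
abbrev Sym (n : ℕ) : Type := ↥(symSubmodule n)

/-- The trace inner product `⟨A, B⟩ = tr(AB)` on `Sⁿ`. -/
noncomputable def ipM {n : ℕ} (A B : Sym n) : ℝ :=
  ((A : Matrix (Fin n) (Fin n) ℝ) * (B : Matrix (Fin n) (Fin n) ℝ)).trace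

/-- The Euclidean inner product on `ℝⁿ`. -/
def ipV {n : ℕ} (v w : Fin n → ℝ) : ℝ :=
  ∑ i, v i * w i

/-- The spectral function `g = θ ∘ λ` on `Sⁿ`. -/
noncomputable def specFn {n : ℕ} (θ : (Fin n → ℝ) → EReal) : Sym n → EReal :=
  fun A => θ (eigval (A : Matrix (Fin n) (Fin n) ℝ))

/-- A function on `ℝⁿ` is symmetric (permutation invariant). -/
def SymmetricFn {n : ℕ} {α : Type*} (θ : (Fin n → ℝ) → α) : Prop :=
  ∀ (x : Fin n → ℝ) (σ : Equiv.Perm (Fin n)), θ (fun i => x (σ i)) = θ x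

/-- The diagonal matrix `Diag(w)` as an element of `Sⁿ`. -/
noncomputable def diagSym {n : ℕ} (w : Fin n → ℝ) : Sym n :=
  ⟨Matrix.diagonal w, Matrix.isSymm_diagonal w⟩

/-- The `i`-th order statistic: `orderStat x i` is the `i`-th largest entry of `x`. -/
noncomputable def orderStat {n : ℕ} (x : Fin n → ℝ) : Fin n → ℝ :=
  fun i => x (Tuple.sort (fun j => -x j) i)



/-! ## Spectral helper lemmas -/

lemma eigval_antitone {n : ℕ} (A : Matrix (Fin n) (Fin n) ℝ) : Antitone (eigval A) := by
  unfold eigval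
  split_ifs with h
  · intro a b hab
    have := Tuple.monotone_sort (fun j => -h.eigenvalues j) hab
    simp only [Function.comp] at this
    linarith
  · intro a b _
    simp

lemma isHermitian_of_symm {n : ℕ} {A : Matrix (Fin n) (Fin n) ℝ} (hA : A.IsSymm) :
    A.IsHermitian := by
  unfold Matrix.IsHermitian
  rw [Matrix.conjTranspose_eq_transpose_of_trivial]
  exact hA

lemma exists_eigOrth {n : ℕ} {A : Matrix (Fin n) (Fin n) ℝ} (hA : A.IsSymm) :
    ∃ U, U ∈ eigOrth A := by
  have h := isHermitian_of_symm hA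
  set V : Matrix (Fin n) (Fin n) ℝ := (h.eigenvectorUnitary : Matrix (Fin n) (Fin n) ℝ) with hV
  set σ := Tuple.sort (fun j => -h.eigenvalues j) with hσ
  have hVV : V * Vᵀ = 1 := by
    have := Unitary.coe_mul_star_self h.eigenvectorUnitary
    rwa [Unitary.coe_star, Matrix.star_eq_conjTranspose,
      Matrix.conjTranspose_eq_transpose_of_trivial] at this
  have hsp : A = V * Matrix.diagonal h.eigenvalues * Vᵀ := by
    have := h.spectral_theorem
    rw [Unitary.conjStarAlgAut_apply, Matrix.star_eq_conjTranspose,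
      Matrix.conjTranspose_eq_transpose_of_trivial] at this
    exact this
  have hev : eigval A = h.eigenvalues ∘ σ := by
    unfold eigval
    rw [dif_pos h]
    rfl
  refine ⟨V.submatrix id σ, ?_, ?_⟩
  · rw [Matrix.transpose_submatrix, Matrix.submatrix_mul_equiv, hVV]
    simp
  · rw [hev, ← Matrix.submatrix_diagonal_equiv, Matrix.transpose_submatrix,
      Matrix.submatrix_mul_equiv, Matrix.submatrix_mul_equiv, ← hsp]
    simp

lemma eigOrth_mul {n : ℕ} {A U : Matrix (Fin n) (Fin n) ℝ} (hU : U ∈ eigOrth A) :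
    Uᵀ * U = 1 := mul_eq_one_comm.mp hU.1

lemma eigOrth_comm {n : ℕ} {A U : Matrix (Fin n) (Fin n) ℝ} (hU : U ∈ eigOrth A) :
    Uᵀ * A = Matrix.diagonal (eigval A) * Uᵀ := by
  conv_lhs => rw [hU.2]
  rw [← Matrix.mul_assoc, ← Matrix.mul_assoc, eigOrth_mul hU, Matrix.one_mul]

lemma dot_conj {n : ℕ} {U : Matrix (Fin n) (Fin n) ℝ} (hU : U * Uᵀ = 1) (x y : Fin n → ℝ) :
    (Uᵀ *ᵥ x) ⬝ᵥ (Uᵀ *ᵥ y) = x ⬝ᵥ y := by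
  rw [Matrix.mulVec_transpose, ← Matrix.dotProduct_mulVec, Matrix.mulVec_mulVec, hU,
    Matrix.one_mulVec]

lemma dot_conj' {n : ℕ} {U : Matrix (Fin n) (Fin n) ℝ} (hU : U * Uᵀ = 1) (x y : Fin n → ℝ) :
    (U *ᵥ x) ⬝ᵥ (U *ᵥ y) = x ⬝ᵥ y := by
  have := dot_conj (U := Uᵀ) (by rw [Matrix.transpose_transpose]; exact mul_eq_one_comm.mp hU) x y
  simpa using this

lemma quad_eq {n : ℕ} {A U : Matrix (Fin n) (Fin n) ℝ} (hU : U ∈ eigOrth A) (x : Fin n → ℝ) :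
    x ⬝ᵥ (A *ᵥ x) = ∑ j, eigval A j * ((Uᵀ *ᵥ x) j) ^ 2 := by
  rw [← dot_conj hU.1, Matrix.mulVec_mulVec, eigOrth_comm hU, ← Matrix.mulVec_mulVec]
  simp only [dotProduct, Matrix.mulVec_diagonal]
  refine Finset.sum_congr rfl fun j _ => by ring

lemma dot_self_sum {n : ℕ} (x : Fin n → ℝ) : x ⬝ᵥ x = ∑ j, x j ^ 2 := by
  simp only [dotProduct]
  refine Finset.sum_congr rfl fun j _ => by ring

lemma dot_self_nonneg' {n : ℕ} (x : Fin n → ℝ) : 0 ≤ x ⬝ᵥ x := by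
  rw [dot_self_sum]; positivity

/-- coefficients of an eigenvector vanish off its eigenvalue -/
lemma coeff_zero {n : ℕ} {A U : Matrix (Fin n) (Fin n) ℝ} (hU : U ∈ eigOrth A) {u : Fin n → ℝ}
    {μ : ℝ} (hu : A *ᵥ u = μ • u) {j : Fin n} (hj : eigval A j ≠ μ) : (Uᵀ *ᵥ u) j = 0 := by
  have h1 : Uᵀ *ᵥ (A *ᵥ u) = μ • (Uᵀ *ᵥ u) := by rw [hu, Matrix.mulVec_smul]
  rw [Matrix.mulVec_mulVec, eigOrth_comm hU, ← Matrix.mulVec_mulVec] at h1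
  have h2 := congrFun h1 j
  rw [Matrix.mulVec_diagonal, Pi.smul_apply, smul_eq_mul] at h2
  have h3 : (eigval A j - μ) * (Uᵀ *ᵥ u) j = 0 := by linarith
  rcases mul_eq_zero.mp h3 with h | h
  · exact absurd (by linarith) hj
  · exact h

/-- vectors supported on a block are eigenvectors -/
lemma eigvec_of_supp {n : ℕ} {A U : Matrix (Fin n) (Fin n) ℝ} (hU : U ∈ eigOrth A) {c : Fin n → ℝ}
    {μ : ℝ} (hc : ∀ j, eigval A j ≠ μ → c j = 0) : A *ᵥ (U *ᵥ c) = μ • (U *ᵥ c) := by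
  conv_lhs => rw [hU.2]
  rw [Matrix.mulVec_mulVec, Matrix.mul_assoc, eigOrth_mul hU, Matrix.mul_one,
    ← Matrix.mulVec_mulVec, ← Matrix.mulVec_smul]
  congr 1
  ext j
  rw [Matrix.mulVec_diagonal, Pi.smul_apply, smul_eq_mul]
  by_cases h : eigval A j = μ
  · rw [h]
  · rw [hc j h]; simp

lemma exists_eigvec {n : ℕ} {A : Matrix (Fin n) (Fin n) ℝ} (hA : A.IsSymm) (i : Fin n) :
    ∃ u : Fin n → ℝ, u ⬝ᵥ u = 1 ∧ A *ᵥ u = eigval A i • u := by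
  obtain ⟨U, hU⟩ := exists_eigOrth hA
  refine ⟨U *ᵥ Pi.single i 1, ?_, eigvec_of_supp hU ?_⟩
  · rw [dot_conj' hU.1]; simp
  · intro j hj
    have : j ≠ i := by rintro rfl; exact hj rfl
    simp [this]

/-- Courant-Fischer lower bound -/
lemma cf_lower {n : ℕ} {A : Matrix (Fin n) (Fin n) ℝ} (hA : A.IsSymm) (i : Fin n)
    (V : Matrix (Fin n) (Fin n) ℝ) (b : ℝ)
    (hV : ∀ c : Fin n → ℝ, (∀ j, i < j → c j = 0) →
      b * (c ⬝ᵥ c) ≤ (V *ᵥ c) ⬝ᵥ (A *ᵥ (V *ᵥ c)) ∧ (V *ᵥ c) ⬝ᵥ (V *ᵥ c) = c ⬝ᵥ c) :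
    b ≤ eigval A i := by
  obtain ⟨U, hU⟩ := exists_eigOrth hA
  let L : (Fin n → ℝ) →ₗ[ℝ] ({j : Fin n // j ≠ i} → ℝ) :=
    LinearMap.pi fun j => if (j : Fin n) < i
      then (LinearMap.proj (j : Fin n)).comp (Uᵀ * V).mulVecLin
      else LinearMap.proj (j : Fin n)
  have hker : LinearMap.ker L ≠ ⊥ := by
    apply LinearMap.ker_ne_bot_of_finrank_lt
    have := i.pos
    simp [Fintype.card_subtype_compl]
    omega
  obtain ⟨c, hc, hc0⟩ := Submodule.exists_mem_ne_zero_of_ne_bot hker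
  have hL : ∀ j : {j : Fin n // j ≠ i}, L c j = 0 := fun j => by
    rw [LinearMap.mem_ker.mp hc]; rfl
  have h1 : ∀ j, i < j → c j = 0 := fun j hj => by
    have := hL ⟨j, hj.ne'⟩
    simpa [L, not_lt.mpr hj.le] using this
  have h2 : ∀ j, j < i → (Uᵀ *ᵥ (V *ᵥ c)) j = 0 := fun j hj => by
    have := hL ⟨j, hj.ne⟩
    rw [Matrix.mulVec_mulVec]
    simpa only [L, LinearMap.pi_apply, hj, if_true, LinearMap.comp_apply, LinearMap.proj_apply,
      Matrix.mulVecLin_apply] using this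
  obtain ⟨h3, h4⟩ := hV c h1
  have hpos : 0 < c ⬝ᵥ c := by
    rcases (dot_self_nonneg' c).lt_or_eq with h | h
    · exact h
    · exact absurd (dotProduct_self_eq_zero.mp h.symm) hc0
  rw [quad_eq hU] at h3
  have h5 : ∑ j, eigval A j * ((Uᵀ *ᵥ (V *ᵥ c)) j) ^ 2 ≤
      eigval A i * (c ⬝ᵥ c) := by
    rw [← h4, ← dot_conj hU.1, dot_self_sum, Finset.mul_sum]
    refine Finset.sum_le_sum fun j _ => ?_
    by_cases hj : j < i
    · rw [h2 j hj]; simp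
    · exact mul_le_mul_of_nonneg_right (eigval_antitone A (not_lt.mp hj)) (sq_nonneg _)
  exact le_of_mul_le_mul_right (h3.trans h5) hpos

lemma mulVec_split {n : ℕ} (Y Z : Matrix (Fin n) (Fin n) ℝ) (x : Fin n → ℝ) :
    x ⬝ᵥ (Z *ᵥ x) = x ⬝ᵥ (Y *ᵥ x) + x ⬝ᵥ ((Z - Y) *ᵥ x) := by
  rw [Matrix.sub_mulVec, dotProduct_sub]; ring

/-- Weyl's inequality -/
lemma weyl_lower {n : ℕ} {Y Z : Matrix (Fin n) (Fin n) ℝ} (hY : Y.IsSymm) (hZ : Z.IsSymm)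
    (i : Fin n) (κ : ℝ) (hκ : ∀ x : Fin n → ℝ, |x ⬝ᵥ ((Z - Y) *ᵥ x)| ≤ κ * (x ⬝ᵥ x)) :
    eigval Y i - κ ≤ eigval Z i := by
  obtain ⟨U, hU⟩ := exists_eigOrth hY
  refine cf_lower hZ i U _ fun c hc => ⟨?_, dot_conj' hU.1 c c⟩
  rw [mulVec_split Y Z, quad_eq hU]
  have h1 := (abs_le.mp (hκ (U *ᵥ c))).1
  rw [dot_conj' hU.1] at h1
  have h2 : eigval Y i * (c ⬝ᵥ c) ≤ ∑ j, eigval Y j * ((Uᵀ *ᵥ (U *ᵥ c)) j) ^ 2 := by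
    rw [Matrix.mulVec_mulVec, eigOrth_mul hU, Matrix.one_mulVec, dot_self_sum, Finset.mul_sum]
    refine Finset.sum_le_sum fun j _ => ?_
    by_cases hj : i < j
    · rw [hc j hj]; simp
    · exact mul_le_mul_of_nonneg_right (eigval_antitone Y (not_lt.mp hj)) (sq_nonneg _)
  linarith

lemma scalar_key {g W b s N κ q : ℝ} (hg : 0 < g) (hW : 0 ≤ W) (hN : 0 ≤ N)
    (hs : s ^ 2 ≤ N ^ 2 * W) (hκ : 4 * κ ≤ g) (hq : q ≤ κ) :
    0 ≤ g * W - κ * W + 2 * b * s - W * q + (2 / g * N ^ 2) * (W + b ^ 2) := by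
  obtain ⟨m, hm, rfl⟩ : ∃ m, 0 ≤ m ∧ W = m ^ 2 :=
    ⟨Real.sqrt W, Real.sqrt_nonneg _, (Real.sq_sqrt hW).symm⟩
  have hs' : |s| ≤ N * m := by
    refine abs_le_of_sq_le_sq ?_ (by positivity)
    rw [mul_pow]; exact hs
  have h1 : -(|b| * (N * m)) ≤ b * s := by
    have : |b * s| ≤ |b| * (N * m) := by
      rw [abs_mul]; exact mul_le_mul_of_nonneg_left hs' (abs_nonneg b)
    exact (abs_le.mp this).1
  have h2 : 0 ≤ 2 / g * N ^ 2 * m ^ 2 := by positivity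
  have h3 : 0 ≤ (g / 2) * (m - 2 / g * N * |b|) ^ 2 := by positivity
  have h4 : (g / 2) * (m - 2 / g * N * |b|) ^ 2 =
      g / 2 * m ^ 2 - 2 * (|b| * (N * m)) + 2 / g * N ^ 2 * b ^ 2 := by
    rw [← sq_abs b]; field_simp; ring
  nlinarith [mul_nonneg (sq_nonneg m) (sub_nonneg.mpr hq), mul_nonneg (sq_nonneg m) (sub_nonneg.mpr hκ)]

/-- Key quadratic lower support -/
lemma lower_support {n : ℕ} {Y Z : Matrix (Fin n) (Fin n) ℝ} (hY : Y.IsSymm) (hZ : Z.IsSymm)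
    (i : Fin n) {g κ N : ℝ} (hg : 0 < g) (hgap : ∀ j, j < i → eigval Y i + g ≤ eigval Y j)
    (hκ : ∀ x : Fin n → ℝ, |x ⬝ᵥ ((Z - Y) *ᵥ x)| ≤ κ * (x ⬝ᵥ x)) (hκg : 4 * κ ≤ g)
    (hN : 0 ≤ N)
    (hNE : ∀ x y : Fin n → ℝ, (x ⬝ᵥ ((Z - Y) *ᵥ y)) ^ 2 ≤ N ^ 2 * ((x ⬝ᵥ x) * (y ⬝ᵥ y)))
    {u : Fin n → ℝ} (hu1 : u ⬝ᵥ u = 1) (hu : Y *ᵥ u = eigval Y i • u) :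
    eigval Y i + u ⬝ᵥ ((Z - Y) *ᵥ u) - 2 / g * N ^ 2 ≤ eigval Z i := by
  obtain ⟨U, hU⟩ := exists_eigOrth hY
  set E := Z - Y with hE
  have hEs : E.IsSymm := by
    rw [hE, Matrix.IsSymm, Matrix.transpose_sub, hY, hZ]
  refine cf_lower hZ i (Matrix.of fun a j => if j < i then U a j else u a) _ fun c hc => ?_
  set c' : Fin n → ℝ := fun j => if j < i then c j else 0 with hc'
  set w := U *ᵥ c' with hw
  have hVc : (Matrix.of fun a j => if j < i then U a j else u a) *ᵥ c = w + c i • u := by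
    ext a
    simp only [hw, hc', Matrix.mulVec, dotProduct, Pi.add_apply, Pi.smul_apply, smul_eq_mul,
      Matrix.of_apply]
    rw [← Finset.sum_erase_add _ _ (Finset.mem_univ i),
      ← Finset.sum_erase_add (f := fun x => U a x * _) _ (Finset.mem_univ i)]
    simp only [lt_irrefl, if_false, mul_zero, add_zero]
    rw [mul_comm (u a)]
    congr 1
    refine Finset.sum_congr rfl fun j hj => ?_
    have hji : j ≠ i := Finset.ne_of_mem_erase hj
    rcases lt_or_gt_of_ne hji with h | h
    · simp [h]
    · simp [not_lt.mpr h.le, hc j h]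
  have hwu : w ⬝ᵥ u = 0 := by
    rw [← dot_conj hU.1, hw, Matrix.mulVec_mulVec, eigOrth_mul hU, Matrix.one_mulVec]
    simp only [dotProduct]
    refine Finset.sum_eq_zero fun j _ => ?_
    by_cases h : j < i
    · rw [coeff_zero hU hu (by have := hgap j h; intro h'; linarith)]; simp
    · simp [hc', h]
  have hww : w ⬝ᵥ w = c' ⬝ᵥ c' := dot_conj' hU.1 _ _
  have hcc : c ⬝ᵥ c = c' ⬝ᵥ c' + c i ^ 2 := by
    rw [dot_self_sum, dot_self_sum, ← Finset.sum_erase_add _ _ (Finset.mem_univ i),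
      ← Finset.sum_erase_add (f := fun x => c' x ^ 2) _ (Finset.mem_univ i)]
    simp only [hc', lt_irrefl, if_false]
    have : ∑ x ∈ Finset.univ.erase i, c x ^ 2 =
        ∑ x ∈ Finset.univ.erase i, (if x < i then c x else 0) ^ 2 := by
      refine Finset.sum_congr rfl fun j hj => ?_
      have hji : j ≠ i := Finset.ne_of_mem_erase hj
      rcases lt_or_gt_of_ne hji with h | h
      · simp [h]
      · simp [not_lt.mpr h.le, hc j h]
    rw [this]; ring
  have hwYw : (eigval Y i + g) * (w ⬝ᵥ w) ≤ w ⬝ᵥ (Y *ᵥ w) := by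
    rw [hww, quad_eq hU, hw, Matrix.mulVec_mulVec, eigOrth_mul hU, Matrix.one_mulVec,
      dot_self_sum, Finset.mul_sum]
    refine Finset.sum_le_sum fun j _ => ?_
    by_cases h : j < i
    · exact mul_le_mul_of_nonneg_right (hgap j h) (sq_nonneg _)
    · simp [hc', h]
  have hsymE : u ⬝ᵥ (E *ᵥ w) = w ⬝ᵥ (E *ᵥ u) := by
    rw [Matrix.dotProduct_mulVec, ← Matrix.mulVec_transpose, hEs, dotProduct_comm]
  have hsymY : u ⬝ᵥ (Y *ᵥ w) = 0 := by
    rw [Matrix.dotProduct_mulVec, ← Matrix.mulVec_transpose, hY, hu, smul_dotProduct,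
      dotProduct_comm, hwu]; simp
  rw [hVc]
  constructor
  · rw [mulVec_split Y Z, ← hE, hcc, ← hww]
    have e1 : (w + c i • u) ⬝ᵥ (Y *ᵥ (w + c i • u)) = w ⬝ᵥ (Y *ᵥ w) + c i ^ 2 * eigval Y i := by
      simp only [Matrix.mulVec_add, Matrix.mulVec_smul, dotProduct_add, add_dotProduct,
        smul_dotProduct, dotProduct_smul, smul_eq_mul, hsymY, hu, hwu, hu1]
      ring
    have e2 : (w + c i • u) ⬝ᵥ (E *ᵥ (w + c i • u)) = w ⬝ᵥ (E *ᵥ w) + 2 * c i * (w ⬝ᵥ (E *ᵥ u))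
        + c i ^ 2 * (u ⬝ᵥ (E *ᵥ u)) := by
      simp only [Matrix.mulVec_add, Matrix.mulVec_smul, dotProduct_add, add_dotProduct,
        smul_dotProduct, dotProduct_smul, smul_eq_mul, hsymE]
      ring
    rw [e1, e2]
    have k1 := (abs_le.mp (hκ w)).1
    have k2 := (abs_le.mp (hκ u)).2
    have k3 := hNE w u
    rw [hu1, mul_one] at k2 k3
    have := scalar_key (b := c i) hg (dot_self_nonneg' w) hN k3 hκg k2
    nlinarith
  · simp only [dotProduct_add, add_dotProduct, smul_dotProduct, dotProduct_smul, smul_eq_mul,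
      hwu, hu1, dotProduct_comm u w]
    rw [hcc, hww]; ring

/-! ## The trace inner product -/

lemma ipM_add_right {n : ℕ} (A B C : Sym n) : ipM A (B + C) = ipM A B + ipM A C := by
  simp [ipM, Matrix.mul_add]

lemma ipM_sub_right {n : ℕ} (A B C : Sym n) : ipM A (B - C) = ipM A B - ipM A C := by
  simp [ipM, Matrix.mul_sub]

lemma ipM_smul_right {n : ℕ} (t : ℝ) (A B : Sym n) : ipM A (t • B) = t * ipM A B := by
  simp [ipM]

lemma ipM_smul_left {n : ℕ} (t : ℝ) (A B : Sym n) : ipM (t • A) B = t * ipM A B := by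
  simp [ipM]

lemma ipM_smul_self {n : ℕ} (t : ℝ) (A : Sym n) : ipM (t • A) (t • A) = t ^ 2 * ipM A A := by
  rw [ipM_smul_left, ipM_smul_right]; ring

lemma ipM_self {n : ℕ} (A : Sym n) : ipM A A = ∑ a, ∑ b, A.val a b ^ 2 := by
  simp only [ipM, Matrix.trace, Matrix.diag_apply, Matrix.mul_apply]
  refine Finset.sum_congr rfl fun a _ => Finset.sum_congr rfl fun b _ => ?_
  have h : A.val b a = A.val a b := Matrix.IsSymm.apply A.2 a b
  rw [h]; ring

lemma ipM_self_nonneg {n : ℕ} (A : Sym n) : 0 ≤ ipM A A := by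
  rw [ipM_self]; positivity

lemma nrm_sq {n : ℕ} (A : Sym n) : nrm ipM A ^ 2 = ipM A A :=
  Real.sq_sqrt (ipM_self_nonneg A)

lemma nrm_nonneg {n : ℕ} (A : Sym n) : 0 ≤ nrm ipM A := Real.sqrt_nonneg _

lemma nrm_pos {n : ℕ} {A : Sym n} (hA : A ≠ 0) : 0 < nrm ipM A := by
  rcases (nrm_nonneg A).lt_or_eq with h | h
  · exact h
  · exfalso
    apply hA
    have h0 : ipM A A = 0 := by rw [← nrm_sq, ← h]; simp
    rw [ipM_self] at h0
    ext a b
    have h1 := (Finset.sum_eq_zero_iff_of_nonneg (fun a _ => by positivity)).mp h0 a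
      (Finset.mem_univ a)
    have h2 := (Finset.sum_eq_zero_iff_of_nonneg (fun a _ => by positivity)).mp h1 b
      (Finset.mem_univ b)
    simpa using h2

lemma nrm_smul {n : ℕ} {t : ℝ} (ht : 0 ≤ t) (A : Sym n) : nrm ipM (t • A) = t * nrm ipM A := by
  unfold nrm
  rw [ipM_smul_self, Real.sqrt_mul (by positivity), Real.sqrt_sq ht]

lemma continuous_ipM {n : ℕ} : Continuous fun p : Sym n × Sym n => ipM p.1 p.2 := by
  unfold ipM
  fun_prop

lemma bil_le {n : ℕ} (A : Sym n) (x y : Fin n → ℝ) :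
    (x ⬝ᵥ (A.val *ᵥ y)) ^ 2 ≤ nrm ipM A ^ 2 * ((x ⬝ᵥ x) * (y ⬝ᵥ y)) := by
  have cs : ∀ v w : Fin n → ℝ, (v ⬝ᵥ w) ^ 2 ≤ (v ⬝ᵥ v) * (w ⬝ᵥ w) := fun v w => by
    rw [dot_self_sum, dot_self_sum]
    exact Finset.sum_mul_sq_le_sq_mul_sq _ _ _
  have h1 := cs x (A.val *ᵥ y)
  have h2 : (A.val *ᵥ y) ⬝ᵥ (A.val *ᵥ y) ≤ ipM A A * (y ⬝ᵥ y) := by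
    rw [dot_self_sum, ipM_self, Finset.sum_mul]
    refine Finset.sum_le_sum fun a _ => ?_
    have := cs (A.val a) y
    rw [dot_self_sum] at this
    exact this
  rw [nrm_sq]
  nlinarith [dot_self_nonneg' x]

lemma quad_le {n : ℕ} (A : Sym n) (x : Fin n → ℝ) :
    |x ⬝ᵥ (A.val *ᵥ x)| ≤ nrm ipM A * (x ⬝ᵥ x) := by
  refine abs_le_of_sq_le_sq ?_ (mul_nonneg (nrm_nonneg A) (dot_self_nonneg' x))
  have := bil_le A x x
  rw [mul_pow]; nlinarith

lemma continuous_nrm {n : ℕ} : Continuous fun A : Sym n => nrm ipM A := by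
  unfold nrm
  exact Real.continuous_sqrt.comp (continuous_ipM.comp (continuous_id.prodMk continuous_id))

lemma sub_val {n : ℕ} (A B : Sym n) : (A - B).val = A.val - B.val := rfl

lemma nrm_neg {n : ℕ} (A B : Sym n) : nrm ipM (A - B) = nrm ipM (B - A) := by
  unfold nrm ipM
  congr 2
  simp only [sub_val]
  rw [← neg_sub B.val A.val, neg_mul_neg]

lemma continuous_eig {n : ℕ} (i : Fin n) : Continuous fun A : Sym n => eigval A.val i := by
  rw [continuous_iff_continuousAt]
  intro X
  have hl : ∀ Y Z : Sym n, eigval Y.val i - nrm ipM (Z - Y) ≤ eigval Z.val i := fun Y Z =>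
    weyl_lower Y.2 Z.2 i _ fun x => quad_le (Z - Y) x
  have hn : Tendsto (fun Z : Sym n => nrm ipM (Z - X)) (𝓝 X) (𝓝 0) := by
    have : Continuous fun Z : Sym n => nrm ipM (Z - X) :=
      continuous_nrm.comp (continuous_id.sub continuous_const)
    have h := this.tendsto X
    simpa [nrm, ipM] using h
  have h1 : Tendsto (fun Z : Sym n => eigval X.val i - nrm ipM (Z - X)) (𝓝 X)
      (𝓝 (eigval X.val i)) := by simpa using hn.const_sub (eigval X.val i)
  have h2 : Tendsto (fun Z : Sym n => eigval X.val i + nrm ipM (Z - X)) (𝓝 X)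
      (𝓝 (eigval X.val i)) := by simpa using hn.const_add (eigval X.val i)
  refine tendsto_of_tendsto_of_tendsto_of_le_of_le h1 h2 (fun Z => hl X Z) fun Z => ?_
  have := hl Z X
  rw [nrm_neg] at this
  show eigval Z.val i ≤ _
  linarith

/-- Local uniform quadratic support near a leading eigenvalue. -/
lemma local_support {n : ℕ} (X : Sym n) (i : Fin n)
    (hlead : ∀ j : Fin n, j < i → eigval X.val i < eigval X.val j) :
    ∃ V ∈ 𝓝 X, ∃ r : ℝ, 0 ≤ r ∧
      (∀ Y ∈ V, ∀ Z ∈ V, ∀ t : ℝ, 0 ≤ t → t ≤ 1 → Y + t • (Z - Y) ∈ V) ∧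
      ∀ Y ∈ V, ∀ Z ∈ V, ∀ u : Fin n → ℝ, u ⬝ᵥ u = 1 → Y.val *ᵥ u = eigval Y.val i • u →
        eigval Y.val i + u ⬝ᵥ ((Z - Y).val *ᵥ u) - r * ipM (Z - Y) (Z - Y) ≤ eigval Z.val i := by
  obtain ⟨δ, hδ, hgap⟩ : ∃ δ > 0, ∀ j, j < i → eigval X.val i + 10 * δ ≤ eigval X.val j := by
    have : ∀ᶠ δ in 𝓝[>] (0 : ℝ), ∀ j, j < i → eigval X.val i + 10 * δ ≤ eigval X.val j := by
      rw [eventually_all]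
      intro j
      rw [eventually_imp_distrib_left]
      intro hj
      have hc : Tendsto (fun δ : ℝ => eigval X.val i + 10 * δ) (𝓝[>] 0) (𝓝 (eigval X.val i)) := by
        have : Continuous fun δ : ℝ => eigval X.val i + 10 * δ := by fun_prop
        have h := (this.tendsto 0).mono_left (nhdsWithin_le_nhds (s := Set.Ioi 0))
        simpa using h
      exact (hc.eventually (gt_mem_nhds (hlead j hj))).mono fun _ h => le_of_lt h
    obtain ⟨δ, h1, h2⟩ := (this.and self_mem_nhdsWithin).exists
    exact ⟨δ, h2, h1⟩
  refine ⟨{Y | ∀ x : Fin n → ℝ, |x ⬝ᵥ ((Y - X).val *ᵥ x)| ≤ δ * (x ⬝ᵥ x)}, ?_, 2 / (8 * δ),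
    by positivity, ?_, ?_⟩
  · have hc : Continuous fun Z : Sym n => nrm ipM (Z - X) :=
      continuous_nrm.comp (continuous_id.sub continuous_const)
    have h0 : nrm ipM (X - X) < δ := by simpa [nrm, ipM] using hδ
    filter_upwards [(hc.tendsto X).eventually (gt_mem_nhds h0)] with Z hZ x
    exact (quad_le _ x).trans (mul_le_mul_of_nonneg_right hZ.le (dot_self_nonneg' x))
  · intro Y hY Z hZ t h0 h1 x
    have e : (Y + t • (Z - Y) - X).val = (1 - t) • (Y - X).val + t • (Z - X).val := by
      simp only [sub_val, Submodule.coe_add, Submodule.coe_smul]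
      module
    rw [e, Matrix.add_mulVec, Matrix.smul_mulVec, Matrix.smul_mulVec, dotProduct_add,
      dotProduct_smul, dotProduct_smul, smul_eq_mul, smul_eq_mul]
    have a := abs_le.mp (hY x)
    have b := abs_le.mp (hZ x)
    rw [abs_le]
    constructor <;> nlinarith [mul_le_mul_of_nonneg_left a.1 (sub_nonneg.mpr h1),
      mul_le_mul_of_nonneg_left a.2 (sub_nonneg.mpr h1),
      mul_le_mul_of_nonneg_left b.1 h0, mul_le_mul_of_nonneg_left b.2 h0]
  · intro Y hY Z hZ u hu1 hu
    have hYX : ∀ j, eigval X.val j - δ ≤ eigval Y.val j := fun j => weyl_lower X.2 Y.2 j δ hY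
    have hXY : ∀ j, eigval Y.val j - δ ≤ eigval X.val j := fun j =>
      weyl_lower Y.2 X.2 j δ fun x => by
        have := hY x
        rw [sub_val, ← neg_sub X.val Y.val, Matrix.neg_mulVec, dotProduct_neg, abs_neg] at this
        exact this
    rw [← nrm_sq]
    refine lower_support Y.2 Z.2 i (κ := 2 * δ) (by positivity) ?_ ?_ (by linarith)
      (nrm_nonneg _) (bil_le (Z - Y)) hu1 hu
    · intro j hj
      have := hgap j hj
      have := hYX j
      have := hXY i
      linarith
    · intro x
      have e : Z.val - Y.val = (Z - X).val - (Y - X).val := by simp only [sub_val]; abel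
      rw [e, Matrix.sub_mulVec, dotProduct_sub]
      have a := abs_le.mp (hY x)
      have b := abs_le.mp (hZ x)
      rw [abs_le]
      constructor <;> linarith

/-- Weak convexity from the local support. -/
lemma weak_convex {n : ℕ} {i : Fin n} {V : Set (Sym n)} {r : ℝ}
    (hconv : ∀ Y ∈ V, ∀ Z ∈ V, ∀ t : ℝ, 0 ≤ t → t ≤ 1 → Y + t • (Z - Y) ∈ V)
    (hsup : ∀ Y ∈ V, ∀ Z ∈ V, ∀ u : Fin n → ℝ, u ⬝ᵥ u = 1 → Y.val *ᵥ u = eigval Y.val i • u →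
        eigval Y.val i + u ⬝ᵥ ((Z - Y).val *ᵥ u) - r * ipM (Z - Y) (Z - Y) ≤ eigval Z.val i)
    {Y Z : Sym n} (hY : Y ∈ V) (hZ : Z ∈ V) {t : ℝ} (h0 : 0 ≤ t) (h1 : t ≤ 1) (hr : 0 ≤ r) :
    eigval (Y + t • (Z - Y)).val i ≤ (1 - t) * eigval Y.val i + t * eigval Z.val i
      + t * (r * ipM (Z - Y) (Z - Y)) := by
  set T := Y + t • (Z - Y) with hT
  obtain ⟨u, hu1, hu⟩ := exists_eigvec T.2 i
  have hTV : T ∈ V := hconv Y hY Z hZ t h0 h1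
  have a := hsup T hTV Y hY u hu1 hu
  have b := hsup T hTV Z hZ u hu1 hu
  have ea : Y - T = (-t) • (Z - Y) := by rw [hT]; module
  have eb : Z - T = (1 - t) • (Z - Y) := by rw [hT]; module
  rw [ea, ipM_smul_self, Submodule.coe_smul, Matrix.smul_mulVec, dotProduct_smul,
    smul_eq_mul] at a
  rw [eb, ipM_smul_self, Submodule.coe_smul, Matrix.smul_mulVec, dotProduct_smul,
    smul_eq_mul] at b
  have hq : 0 ≤ r * ipM (Z - Y) (Z - Y) := mul_nonneg hr (ipM_self_nonneg _)
  set q := r * ipM (Z - Y) (Z - Y)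
  set p := u ⬝ᵥ ((Z - Y).val *ᵥ u)
  have a' : eigval T.val i + (-t) * p - t ^ 2 * q ≤ eigval Y.val i := by linarith
  have b' : eigval T.val i + (1 - t) * p - (1 - t) ^ 2 * q ≤ eigval Z.val i := by linarith
  have c1 := mul_le_mul_of_nonneg_left a' (sub_nonneg.mpr h1)
  have c2 := mul_le_mul_of_nonneg_left b' h0
  have c3 : 0 ≤ t ^ 2 * q := by positivity
  nlinarith

/-! ## Directional derivative -/

lemma nhds_prod_le {n : ℕ} (H : Sym n) :
    (𝓝[>] (0 : ℝ)) ×ˢ 𝓝 H ≤ 𝓝 ((0 : ℝ), H) := by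
  rw [nhds_prod_eq]
  exact Filter.prod_mono nhdsWithin_le_nhds le_rfl

lemma continuous_quad {n : ℕ} :
    Continuous fun p : Sym n × (Fin n → ℝ) => p.2 ⬝ᵥ (p.1.val *ᵥ p.2) := by
  fun_prop

lemma semideriv {n : ℕ} (X : Sym n) (i : Fin n)
    (hlead : ∀ j : Fin n, j < i → eigval X.val i < eigval X.val j) (H : Sym n) (D : ℝ)
    (hD1 : ∀ u : Fin n → ℝ, u ⬝ᵥ u = 1 → X.val *ᵥ u = eigval X.val i • u →
      u ⬝ᵥ (H.val *ᵥ u) ≤ D)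
    (hD2 : ∃ u : Fin n → ℝ, u ⬝ᵥ u = 1 ∧ X.val *ᵥ u = eigval X.val i • u ∧
      u ⬝ᵥ (H.val *ᵥ u) = D) :
    Tendsto (fun p : ℝ × Sym n => p.1⁻¹ * (eigval (X + p.1 • p.2).val i - eigval X.val i))
      ((𝓝[>] (0 : ℝ)) ×ˢ 𝓝 H) (𝓝 D) := by
  obtain ⟨V, hV, r, hr, hconv, hsup⟩ := local_support X i hlead
  have hXV : X ∈ V := mem_of_mem_nhds hV
  have hcont : Tendsto (fun p : ℝ × Sym n => X + p.1 • p.2) ((𝓝[>] (0 : ℝ)) ×ˢ 𝓝 H) (𝓝 X) := by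
    have hc : Continuous fun p : ℝ × Sym n => X + p.1 • p.2 := by fun_prop
    have := (hc.tendsto (0, H)).mono_left (nhds_prod_le H)
    simpa using this
  have hinV : ∀ᶠ p : ℝ × Sym n in (𝓝[>] (0 : ℝ)) ×ˢ 𝓝 H, X + p.1 • p.2 ∈ V := hcont hV
  have hpos : ∀ᶠ p : ℝ × Sym n in (𝓝[>] (0 : ℝ)) ×ˢ 𝓝 H, 0 < p.1 :=
    tendsto_fst.eventually self_mem_nhdsWithin
  have hrem : Tendsto (fun p : ℝ × Sym n => p.1 * (r * ipM p.2 p.2))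
      ((𝓝[>] (0 : ℝ)) ×ˢ 𝓝 H) (𝓝 0) := by
    have hc : Continuous fun p : ℝ × Sym n => p.1 * (r * ipM p.2 p.2) := by
      have := continuous_ipM.comp (continuous_snd.prodMk continuous_snd : Continuous
        fun p : ℝ × Sym n => (p.2, p.2))
      exact continuous_fst.mul (continuous_const.mul this)
    have := (hc.tendsto (0, H)).mono_left (nhds_prod_le H)
    simpa using this
  rw [tendsto_order]
  constructor
  · intro a ha
    obtain ⟨u, hu1, hu, huD⟩ := hD2
    have hlim : Tendsto (fun p : ℝ × Sym n => u ⬝ᵥ (p.2.val *ᵥ u) - p.1 * (r * ipM p.2 p.2))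
        ((𝓝[>] (0 : ℝ)) ×ˢ 𝓝 H) (𝓝 D) := by
      have hc : Continuous fun p : ℝ × Sym n => u ⬝ᵥ (p.2.val *ᵥ u) := by fun_prop
      have := ((hc.tendsto (0, H)).mono_left (nhds_prod_le H)).sub hrem
      simpa [huD] using this
    filter_upwards [hlim.eventually (lt_mem_nhds ha), hinV, hpos] with p h1 h2 h3
    have h4 := hsup X hXV _ h2 u hu1 hu
    rw [add_sub_cancel_left, ipM_smul_self, Submodule.coe_smul, Matrix.smul_mulVec,
      dotProduct_smul, smul_eq_mul] at h4
    refine lt_of_lt_of_le h1 ?_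
    rw [inv_mul_eq_div, le_div_iff₀ h3]
    linarith
  · intro a ha
    set ε := (a - D) / 2 with hε
    have hε0 : 0 < ε := by linarith
    have hcomp : IsCompact {u : Fin n → ℝ | u ⬝ᵥ u = 1} := by
      apply Metric.isCompact_of_isClosed_isBounded
      · exact isClosed_eq (by fun_prop) continuous_const
      · refine (Metric.isBounded_iff_subset_closedBall 0).mpr ⟨1, fun u hu => ?_⟩
        rw [mem_closedBall_zero_iff, pi_norm_le_iff_of_nonneg zero_le_one]
        intro j
        have hu' : u ⬝ᵥ u = 1 := hu
        rw [dot_self_sum] at hu'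
        have := Finset.single_le_sum (f := fun j => u j ^ 2) (fun j _ => sq_nonneg (u j))
          (Finset.mem_univ j)
        rw [Real.norm_eq_abs, ← sq_le_one_iff_abs_le_one]
        linarith
    have hev : ∀ᶠ Y in 𝓝 X, ∀ u ∈ {u : Fin n → ℝ | u ⬝ᵥ u = 1},
        ¬ (Y.val *ᵥ u = eigval Y.val i • u ∧ D + ε ≤ u ⬝ᵥ (H.val *ᵥ u)) := by
      apply hcomp.eventually_forall_of_forall_eventually
      intro u hu
      have hclosed : IsClosed {p : Sym n × (Fin n → ℝ) |
          p.1.val *ᵥ p.2 = eigval p.1.val i • p.2 ∧ D + ε ≤ p.2 ⬝ᵥ (H.val *ᵥ p.2)} := by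
        rw [Set.ofPred_and]
        refine IsClosed.inter (isClosed_eq (by fun_prop) ?_) (isClosed_le continuous_const ?_)
        · exact ((continuous_eig i).comp continuous_fst).smul continuous_snd
        · fun_prop
      have hn : (X, u) ∉ {p : Sym n × (Fin n → ℝ) |
          p.1.val *ᵥ p.2 = eigval p.1.val i • p.2 ∧ D + ε ≤ p.2 ⬝ᵥ (H.val *ᵥ p.2)} := by
        rintro ⟨h1, h2⟩
        have := hD1 u hu h1
        simp only at h2
        linarith
      exact hclosed.isOpen_compl.mem_nhds hn
    have hnr : Tendsto (fun p : ℝ × Sym n => nrm ipM (p.2 - H) + p.1 * (r * ipM p.2 p.2))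
        ((𝓝[>] (0 : ℝ)) ×ˢ 𝓝 H) (𝓝 0) := by
      have hc : Continuous fun p : ℝ × Sym n => nrm ipM (p.2 - H) :=
        continuous_nrm.comp (continuous_snd.sub continuous_const)
      have := ((hc.tendsto (0, H)).mono_left (nhds_prod_le H)).add hrem
      simpa [nrm, ipM] using this
    filter_upwards [hcont.eventually hev, hnr.eventually (gt_mem_nhds hε0), hinV, hpos]
      with p h1 h2 h3 h4
    obtain ⟨u, hu1, hu⟩ := exists_eigvec (X + p.1 • p.2).2 i
    have h5 : u ⬝ᵥ (H.val *ᵥ u) < D + ε := by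
      by_contra hcon
      exact h1 u hu1 ⟨hu, not_lt.mp hcon⟩
    have h6 := hsup _ h3 X hXV u hu1 hu
    have e : X - (X + p.1 • p.2) = (-p.1) • p.2 := by module
    rw [e, ipM_smul_self, Submodule.coe_smul, Matrix.smul_mulVec, dotProduct_smul,
      smul_eq_mul] at h6
    have h7 := (abs_le.mp (quad_le (p.2 - H) u)).2
    rw [hu1, mul_one, sub_val, Matrix.sub_mulVec, dotProduct_sub] at h7
    rw [inv_mul_eq_div, div_lt_iff₀ h4]
    have h8 : u ⬝ᵥ (p.2.val *ᵥ u) + p.1 * (r * ipM p.2 p.2) < a := by linarith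
    have := mul_lt_mul_of_pos_right h8 h4
    linarith

/-! ## Block matrices -/

lemma sum_block {n : ℕ} (X : Matrix (Fin n) (Fin n) ℝ) (i : Fin n) (G : Fin n → ℝ)
    (hG : ∀ j, eigval X j ≠ eigval X i → G j = 0) :
    ∑ j, G j = ∑ a, G (blockEmb X i a) := by
  have h1 : ∑ j ∈ blockSet X i, G j = ∑ j, G j := by
    refine Finset.sum_subset (Finset.subset_univ _) fun j _ hj => hG j ?_
    simpa [blockSet] using hj
  rw [← h1, ← Finset.sum_coe_sort]
  exact (Equiv.sum_comp ((blockSet X i).orderIsoOfFin rfl).toEquiv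
    (fun j : blockSet X i => G j)).symm

lemma quad_block {n : ℕ} (X M : Matrix (Fin n) (Fin n) ℝ) (i : Fin n) (c : Fin n → ℝ)
    (hc : ∀ j, eigval X j ≠ eigval X i → c j = 0) :
    c ⬝ᵥ (M *ᵥ c) = (c ∘ blockEmb X i) ⬝ᵥ (blockMat X M i *ᵥ (c ∘ blockEmb X i)) := by
  simp only [dotProduct, Matrix.mulVec, blockMat, Matrix.of_apply, Function.comp]
  rw [sum_block X i _ (fun j hj => by rw [hc j hj, zero_mul])]
  refine Finset.sum_congr rfl fun a _ => ?_
  rw [sum_block X i _ (fun j hj => by rw [hc j hj, mul_zero])]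

lemma dot_block {n : ℕ} (X : Matrix (Fin n) (Fin n) ℝ) (i : Fin n) (c : Fin n → ℝ)
    (hc : ∀ j, eigval X j ≠ eigval X i → c j = 0) :
    c ⬝ᵥ c = (c ∘ blockEmb X i) ⬝ᵥ (c ∘ blockEmb X i) := by
  simp only [dotProduct, Function.comp]
  rw [sum_block X i _ (fun j hj => by rw [hc j hj, zero_mul])]

lemma conj_quad {n : ℕ} (U H : Matrix (Fin n) (Fin n) ℝ) (c : Fin n → ℝ) :
    (U *ᵥ c) ⬝ᵥ (H *ᵥ (U *ᵥ c)) = c ⬝ᵥ ((Uᵀ * H * U) *ᵥ c) := by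
  rw [← Matrix.mulVec_mulVec, ← Matrix.mulVec_mulVec, Matrix.dotProduct_mulVec c,
    Matrix.vecMul_transpose]

lemma top_eig_le {k : ℕ} {B : Matrix (Fin k) (Fin k) ℝ} (hB : B.IsSymm) (hk : 0 < k)
    (y : Fin k → ℝ) : y ⬝ᵥ (B *ᵥ y) ≤ eigval B ⟨0, hk⟩ * (y ⬝ᵥ y) := by
  obtain ⟨U, hU⟩ := exists_eigOrth hB
  rw [quad_eq hU, ← dot_conj hU.1, dot_self_sum, Finset.mul_sum]
  refine Finset.sum_le_sum fun j _ => mul_le_mul_of_nonneg_right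
    (eigval_antitone B (Fin.mk_le_of_le_val (Nat.zero_le _))) (sq_nonneg _)

lemma block_deriv {n : ℕ} (X : Sym n) (i : Fin n) {U : Matrix (Fin n) (Fin n) ℝ}
    (hU : U ∈ eigOrth X.val) (H : Sym n) (hk : 0 < (blockSet X.val i).card) :
    (∀ u : Fin n → ℝ, u ⬝ᵥ u = 1 → X.val *ᵥ u = eigval X.val i • u →
      u ⬝ᵥ (H.val *ᵥ u) ≤ eigval (blockMat X.val (Uᵀ * H.val * U) i) ⟨0, hk⟩) ∧
    (∃ u : Fin n → ℝ, u ⬝ᵥ u = 1 ∧ X.val *ᵥ u = eigval X.val i • u ∧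
      u ⬝ᵥ (H.val *ᵥ u) = eigval (blockMat X.val (Uᵀ * H.val * U) i) ⟨0, hk⟩) := by
  have hM : (Uᵀ * H.val * U).IsSymm := by
    have hH : H.valᵀ = H.val := H.2
    rw [Matrix.IsSymm, Matrix.transpose_mul, Matrix.transpose_mul, Matrix.transpose_transpose,
      hH, Matrix.mul_assoc]
  have hB : (blockMat X.val (Uᵀ * H.val * U) i).IsSymm := by
    ext a b
    exact hM.apply _ _
  constructor
  · intro u hu1 hu
    have hc : ∀ j, eigval X.val j ≠ eigval X.val i → (Uᵀ *ᵥ u) j = 0 :=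
      fun j hj => coeff_zero hU hu hj
    have huc : u = U *ᵥ (Uᵀ *ᵥ u) := by rw [Matrix.mulVec_mulVec, hU.1, Matrix.one_mulVec]
    have h1 : (Uᵀ *ᵥ u) ⬝ᵥ (Uᵀ *ᵥ u) = 1 := by rw [dot_conj hU.1, hu1]
    rw [huc, conj_quad, quad_block X.val _ i _ hc]
    have := top_eig_le hB hk ((Uᵀ *ᵥ u) ∘ blockEmb X.val i)
    rwa [← dot_block X.val i _ hc, h1, mul_one] at this
  · obtain ⟨y, hy1, hy⟩ := exists_eigvec hB ⟨0, hk⟩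
    classical
    let c : Fin n → ℝ := fun j => if h : j ∈ blockSet X.val i then
      y (((blockSet X.val i).orderIsoOfFin rfl).symm ⟨j, h⟩) else 0
    have hc : ∀ j, eigval X.val j ≠ eigval X.val i → c j = 0 := fun j hj => by
      have : j ∉ blockSet X.val i := by simpa [blockSet] using hj
      simp [c, this]
    have hcy : c ∘ blockEmb X.val i = y := by
      ext a
      have hmem : blockEmb X.val i a ∈ blockSet X.val i :=
        ((blockSet X.val i).orderIsoOfFin rfl a).2
      have he : (⟨blockEmb X.val i a, hmem⟩ : blockSet X.val i) =
        (blockSet X.val i).orderIsoOfFin rfl a := rfl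
      simp only [c, Function.comp, dif_pos hmem, he, OrderIso.symm_apply_apply]
    refine ⟨U *ᵥ c, ?_, eigvec_of_supp hU hc, ?_⟩
    · rw [dot_conj' hU.1, dot_block X.val i c hc, hcy, hy1]
    · rw [conj_quad, quad_block X.val _ i c hc, hcy, hy, dotProduct_smul, hy1]
      simp

/-! ## Subgradients -/

lemma regSubgrad_iff {n : ℕ} (f : Sym n → ℝ) (x v : Sym n) :
    RegSubgrad ipM (fun A => ((f A : ℝ) : EReal)) x v ↔
      ∀ ε > 0, ∀ᶠ y in 𝓝[≠] x, -(ε * nrm ipM (y - x)) ≤ f y - f x - ipM v (y - x) := by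
  have hfin : IsFiniteAt (fun A => ((f A : ℝ) : EReal)) x :=
    ⟨EReal.coe_ne_top _, EReal.coe_ne_bot _⟩
  unfold RegSubgrad
  rw [and_iff_right hfin, Filter.le_liminf_iff]
  have hcoe : ∀ y, (((nrm ipM (y - x))⁻¹ : ℝ) : EReal) *
      (((f y : ℝ) : EReal) - ((f x : ℝ) : EReal) - ((ipM v (y - x) : ℝ) : EReal)) =
      (((nrm ipM (y - x))⁻¹ * (f y - f x - ipM v (y - x)) : ℝ) : EReal) := fun y => by
    push_cast; rfl
  simp only [hcoe]
  constructor
  · intro h ε hε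
    have h1 := h ((-ε : ℝ) : EReal) (by exact_mod_cast neg_lt_zero.mpr hε)
    filter_upwards [h1, self_mem_nhdsWithin] with y hy hne
    have hpos : 0 < nrm ipM (y - x) := nrm_pos (sub_ne_zero.mpr hne)
    have h2 : -ε < (nrm ipM (y - x))⁻¹ * (f y - f x - ipM v (y - x)) := by exact_mod_cast hy
    rw [inv_mul_eq_div, lt_div_iff₀ hpos] at h2
    linarith
  · intro h b hb
    obtain ⟨q, hq1, hq2⟩ := EReal.lt_iff_exists_real_btwn.mp hb
    have hq : q < 0 := by exact_mod_cast hq2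
    filter_upwards [h (-q) (by linarith), self_mem_nhdsWithin] with y hy hne
    have hpos : 0 < nrm ipM (y - x) := nrm_pos (sub_ne_zero.mpr hne)
    refine lt_of_lt_of_le hq1 ?_
    rw [EReal.coe_le_coe_iff, inv_mul_eq_div, le_div_iff₀ hpos]
    linarith

lemma regSubgrad_of_quad {n : ℕ} (f : Sym n → ℝ) (x v : Sym n) (r : ℝ)
    (h : ∀ᶠ y in 𝓝 x, f x + ipM v (y - x) - r * ipM (y - x) (y - x) ≤ f y) :
    RegSubgrad ipM (fun A => ((f A : ℝ) : EReal)) x v := by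
  rw [regSubgrad_iff]
  intro ε hε
  have hc : Tendsto (fun y : Sym n => r * nrm ipM (y - x)) (𝓝 x) (𝓝 0) := by
    have : Continuous fun y : Sym n => r * nrm ipM (y - x) :=
      continuous_const.mul (continuous_nrm.comp (continuous_id.sub continuous_const))
    have h := this.tendsto x
    simpa [nrm, ipM] using h
  have h2 := h.and (hc.eventually (gt_mem_nhds hε))
  filter_upwards [h2.filter_mono nhdsWithin_le_nhds] with y hy
  obtain ⟨a, b⟩ := hy
  rw [← nrm_sq] at a
  have := mul_le_mul_of_nonneg_right b.le (nrm_nonneg (y - x))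
  nlinarith

lemma quad_of_regSubgrad {n : ℕ} {i : Fin n} {V : Set (Sym n)} {r : ℝ} (hr : 0 ≤ r)
    (hconv : ∀ Y ∈ V, ∀ Z ∈ V, ∀ t : ℝ, 0 ≤ t → t ≤ 1 → Y + t • (Z - Y) ∈ V)
    (hsup : ∀ Y ∈ V, ∀ Z ∈ V, ∀ u : Fin n → ℝ, u ⬝ᵥ u = 1 → Y.val *ᵥ u = eigval Y.val i • u →
        eigval Y.val i + u ⬝ᵥ ((Z - Y).val *ᵥ u) - r * ipM (Z - Y) (Z - Y) ≤ eigval Z.val i)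
    {Y Z v : Sym n} (hY : Y ∈ V) (hZ : Z ∈ V)
    (hv : RegSubgrad ipM (fun A : Sym n => ((eigval A.val i : ℝ) : EReal)) Y v) :
    eigval Y.val i + ipM v (Z - Y) - r * ipM (Z - Y) (Z - Y) ≤ eigval Z.val i := by
  rw [regSubgrad_iff (fun A : Sym n => eigval A.val i)] at hv
  by_cases hne : Z = Y
  · subst hne; simp [ipM]
  have hd : Z - Y ≠ 0 := sub_ne_zero.mpr hne
  have hn := nrm_pos hd
  refine le_of_forall_pos_le_add fun η hη => ?_
  have hev := hv (η / nrm ipM (Z - Y)) (by positivity)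
  have htend : Tendsto (fun t : ℝ => Y + t • (Z - Y)) (𝓝[>] 0) (𝓝[≠] Y) := by
    rw [tendsto_nhdsWithin_iff]
    constructor
    · have : Continuous fun t : ℝ => Y + t • (Z - Y) := by fun_prop
      have h := (this.tendsto 0).mono_left (nhdsWithin_le_nhds (s := Set.Ioi 0))
      simpa using h
    · filter_upwards [self_mem_nhdsWithin] with t ht
      have ht' : (0 : ℝ) < t := ht
      simp [ht'.ne', hd]
  have h1 : ∀ᶠ t : ℝ in 𝓝[>] 0, t < 1 :=
    (gt_mem_nhds (zero_lt_one)).filter_mono nhdsWithin_le_nhds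
  obtain ⟨t, ha, hb, hc⟩ := ((htend.eventually hev).and (h1.and self_mem_nhdsWithin)).exists
  have ht : (0 : ℝ) < t := hc
  have hw := weak_convex hconv hsup hY hZ ht.le hb.le hr
  rw [add_sub_cancel_left, nrm_smul ht.le, ipM_smul_right] at ha
  have e : η / nrm ipM (Z - Y) * (t * nrm ipM (Z - Y)) = t * η := by field_simp
  rw [e] at ha
  have h2 : t * (eigval Y.val i + ipM v (Z - Y) - r * ipM (Z - Y) (Z - Y)) ≤
      t * (eigval Z.val i + η) := by linarith
  exact le_of_mul_le_mul_left h2 ht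

lemma regular_at {n : ℕ} (X : Sym n) (i : Fin n)
    (hlead : ∀ j : Fin n, j < i → eigval X.val i < eigval X.val j) :
    SubdiffRegularAt ipM (fun A : Sym n => ((eigval A.val i : ℝ) : EReal)) X := by
  refine ⟨⟨EReal.coe_ne_top _, EReal.coe_ne_bot _⟩, ?_⟩
  obtain ⟨V, hV, r, hr, hconv, hsup⟩ := local_support X i hlead
  have hXV : X ∈ V := mem_of_mem_nhds hV
  have hepi : ∀ p : Sym n × ℝ, p ∈ epiSet (fun A : Sym n => ((eigval A.val i : ℝ) : EReal)) ↔
      eigval p.1.val i ≤ p.2 := fun p => by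
    show ((eigval p.1.val i : ℝ) : EReal) ≤ (p.2 : EReal) ↔ _
    exact EReal.coe_le_coe_iff
  simp only [EReal.toReal_coe]
  apply Set.Subset.antisymm
  · intro v hv
    exact ⟨fun _ => (X, eigval X.val i), fun _ => v, fun _ => (hepi _).mpr le_rfl, fun _ => hv,
      tendsto_const_nhds, tendsto_const_nhds⟩
  · rintro ⟨v, β⟩ ⟨xs, vs, hxs, hvs, hx, hv⟩
    have hx1 : Tendsto (fun k => (xs k).1) atTop (𝓝 X) := (continuous_fst.tendsto _).comp hx
    have hx2 : Tendsto (fun k => (xs k).2) atTop (𝓝 (eigval X.val i)) :=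
      (continuous_snd.tendsto _).comp hx
    have hv1 : Tendsto (fun k => (vs k).1) atTop (𝓝 v) := (continuous_fst.tendsto _).comp hv
    have hv2 : Tendsto (fun k => (vs k).2) atTop (𝓝 β) := (continuous_snd.tendsto _).comp hv
    have key : ∀ Z ∈ V, ∀ σ : ℝ, eigval Z.val i ≤ σ →
        ipM v (Z - X) + β * (σ - eigval X.val i + r * ipM (Z - X) (Z - X)) ≤ 0 := by
      intro Z hZ σ hσ
      have hlim : Tendsto (fun k => ipM (vs k).1 (Z - (xs k).1) + (vs k).2 *
          (σ - (xs k).2 + r * ipM (Z - (xs k).1) (Z - (xs k).1))) atTop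
          (𝓝 (ipM v (Z - X) + β * (σ - eigval X.val i + r * ipM (Z - X) (Z - X)))) := by
        have hs : Tendsto (fun k => Z - (xs k).1) atTop (𝓝 (Z - X)) := hx1.const_sub Z
        have a1 := (continuous_ipM.tendsto (v, Z - X)).comp (hv1.prodMk_nhds hs)
        have a2 := (continuous_ipM.tendsto (Z - X, Z - X)).comp (hs.prodMk_nhds hs)
        exact a1.add (hv2.mul ((hx2.const_sub σ).add (a2.const_mul r)))
      refine le_of_tendsto hlim ?_
      filter_upwards [hx1 hV] with k hk
      have hk' : (xs k).1 ∈ V := hk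
      have := hvs k (Z - (xs k).1, σ - (xs k).2 + r * ipM (Z - (xs k).1) (Z - (xs k).1)) ?_
      · exact this
      refine ⟨fun m => 1 / ((m : ℝ) + 1), fun _ => _, fun m => by positivity,
        tendsto_one_div_add_atTop_nhds_zero_nat, tendsto_const_nhds, fun m => ?_⟩
      rw [hepi]
      have ht0 : (0 : ℝ) ≤ 1 / ((m : ℝ) + 1) := by positivity
      have ht1 : 1 / ((m : ℝ) + 1) ≤ 1 := by
        rw [div_le_one (by positivity)]
        have : (0 : ℝ) ≤ m := Nat.cast_nonneg m
        linarith
      have hw := weak_convex hconv hsup hk' hZ ht0 ht1 hr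
      have hs := (hepi _).mp (hxs k)
      simp only [Prod.fst_add, Prod.smul_fst, Prod.snd_add, Prod.smul_snd, smul_eq_mul]
      set t := 1 / ((m : ℝ) + 1)
      refine hw.trans ?_
      have b1 := mul_le_mul_of_nonneg_left hs (sub_nonneg.mpr ht1)
      have b2 := mul_le_mul_of_nonneg_left hσ ht0
      linarith
    rintro ⟨H, τ⟩ ⟨t, ws, ht, ht0, hws, hmem⟩
    have hw1 : Tendsto (fun k => (ws k).1) atTop (𝓝 H) := (continuous_fst.tendsto _).comp hws
    have hw2 : Tendsto (fun k => (ws k).2) atTop (𝓝 τ) := (continuous_snd.tendsto _).comp hws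
    have hlim : Tendsto (fun k => ipM v (ws k).1 + β * ((ws k).2 +
        t k * (r * ipM (ws k).1 (ws k).1))) atTop
        (𝓝 (ipM v H + β * (τ + 0 * (r * ipM H H)))) := by
      have a1 := (continuous_ipM.tendsto (v, H)).comp
        ((tendsto_const_nhds (x := v) (f := (atTop : Filter ℕ))).prodMk_nhds hw1)
      have a2 := (continuous_ipM.tendsto (H, H)).comp (hw1.prodMk_nhds hw1)
      exact a1.add ((hw2.add (ht0.mul (a2.const_mul r))).const_mul β)
    have hgoal : ipM v H + β * (τ + 0 * (r * ipM H H)) ≤ 0 := by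
      refine le_of_tendsto hlim ?_
      have hXk : Tendsto (fun k => X + t k • (ws k).1) atTop (𝓝 X) := by
        have := (ht0.smul hw1).const_add X
        simpa using this
      filter_upwards [hXk hV] with k hk
      have h1 := (hepi _).mp (hmem k)
      simp only [Prod.fst_add, Prod.smul_fst, Prod.snd_add, Prod.smul_snd, smul_eq_mul] at h1
      have h2 := key _ hk _ h1
      rw [add_sub_cancel_left, ipM_smul_self, ipM_smul_right] at h2
      have h3 : t k * (ipM v (ws k).1 + β * ((ws k).2 + t k * (r * ipM (ws k).1 (ws k).1))) ≤
          t k * 0 := by linarith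
      exact le_of_mul_le_mul_left h3 (ht k)
    show ipM v H + β * τ ≤ 0
    linarith

/-! ## Simultaneous diagonalisation -/

lemma diag_extend {n : ℕ} (p : Fin n → Prop) [DecidablePred p] (C : Matrix (Fin n) (Fin n) ℝ)
    (hC : C.IsSymm) (h0 : ∀ j k, ¬ p j → C j k = 0) (d : Fin n → ℝ) (μ : ℝ)
    (hd : ∀ j, p j → d j = μ) :
    ∃ (W : Matrix (Fin n) (Fin n) ℝ) (z : Fin n → ℝ), W * Wᵀ = 1 ∧
      W * Matrix.diagonal d * Wᵀ = Matrix.diagonal d ∧ (∀ j, ¬ p j → z j = 0) ∧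
      C = W * Matrix.diagonal z * Wᵀ := by
  set e := Equiv.sumCompl p with he
  set B : Matrix {j // p j} {j // p j} ℝ := C.submatrix Subtype.val Subtype.val with hBdef
  have hBs : B.IsHermitian := by
    unfold Matrix.IsHermitian
    rw [Matrix.conjTranspose_eq_transpose_of_trivial]
    ext a b
    exact hC.apply _ _
  set Q : Matrix {j // p j} {j // p j} ℝ := 
    (hBs.eigenvectorUnitary : Matrix {j // p j} {j // p j} ℝ) with hQ
  have hQQ : Q * Qᵀ = 1 := by
    have := Unitary.coe_mul_star_self hBs.eigenvectorUnitary
    rwa [Unitary.coe_star, Matrix.star_eq_conjTranspose,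
      Matrix.conjTranspose_eq_transpose_of_trivial] at this
  have hsp : B = Q * Matrix.diagonal hBs.eigenvalues * Qᵀ := by
    have := hBs.spectral_theorem
    rw [Unitary.conjStarAlgAut_apply, Matrix.star_eq_conjTranspose,
      Matrix.conjTranspose_eq_transpose_of_trivial] at this
    exact this
  set R : Matrix ({j // p j} ⊕ {j // ¬ p j}) ({j // p j} ⊕ {j // ¬ p j}) ℝ :=
    Matrix.fromBlocks Q 0 0 1 with hR
  have hconj : ∀ (a : {j // p j} → ℝ) (b : {j // ¬ p j} → ℝ),
      R * Matrix.diagonal (Sum.elim a b) * Rᵀ =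
        Matrix.fromBlocks (Q * Matrix.diagonal a * Qᵀ) 0 0 (Matrix.diagonal b) := by
    intro a b
    rw [hR, ← Matrix.fromBlocks_diagonal, Matrix.fromBlocks_transpose,
      Matrix.fromBlocks_multiply, Matrix.fromBlocks_multiply]
    simp
  have hsub : ∀ (a : {j // p j} → ℝ) (b : {j // ¬ p j} → ℝ),
      R.submatrix e.symm e.symm * Matrix.diagonal (Sum.elim a b ∘ e.symm) *
        (R.submatrix e.symm e.symm)ᵀ =
        (Matrix.fromBlocks (Q * Matrix.diagonal a * Qᵀ) 0 0 (Matrix.diagonal b)).submatrix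
          e.symm e.symm := by
    intro a b
    rw [← hconj, ← Matrix.submatrix_diagonal_equiv, Matrix.transpose_submatrix,
      Matrix.submatrix_mul_equiv, Matrix.submatrix_mul_equiv]
  have hsymm1 : ∀ j (h : p j), e.symm j = Sum.inl ⟨j, h⟩ := fun j h =>
    Equiv.sumCompl_symm_apply_of_pos h
  have hsymm2 : ∀ j (h : ¬ p j), e.symm j = Sum.inr ⟨j, h⟩ := fun j h =>
    Equiv.sumCompl_symm_apply_of_neg h
  refine ⟨R.submatrix e.symm e.symm, Sum.elim hBs.eigenvalues 0 ∘ e.symm, ?_, ?_, ?_, ?_⟩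
  · rw [Matrix.transpose_submatrix, Matrix.submatrix_mul_equiv, hR, Matrix.fromBlocks_transpose,
      Matrix.fromBlocks_multiply]
    simp [hQQ, Matrix.fromBlocks_one]
  · have hde : d = Sum.elim (fun _ => μ) (fun j : {j // ¬ p j} => d j) ∘ e.symm := by
      ext j
      by_cases h : p j
      · simp [hsymm1 j h, hd j h]
      · simp [hsymm2 j h]
    have h1 : Q * Matrix.diagonal (fun _ => μ) * Qᵀ = Matrix.diagonal (fun _ => μ) := by
      rw [← Matrix.smul_one_eq_diagonal, Matrix.mul_smul, Matrix.smul_mul, Matrix.mul_one, hQQ]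
    have h2 := hsub (fun _ => μ) (fun j : {j // ¬ p j} => d j)
    rw [← hde, h1, Matrix.fromBlocks_diagonal, Matrix.submatrix_diagonal_equiv, ← hde] at h2
    exact h2
  · intro j h
    simp [hsymm2 j h]
  · rw [hsub, ← hsp]
    ext j k
    by_cases hj : p j
    · by_cases hk : p k
      · simp [hsymm1 j hj, hsymm1 k hk, hBdef]
      · have : C j k = 0 := by rw [← hC.apply]; exact h0 k j hk
        simp [hsymm1 j hj, hsymm2 k hk, this]
    · by_cases hk : p k
      · simp [hsymm2 j hj, hsymm1 k hk, h0 j k hj]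
      · simp [hsymm2 j hj, hsymm2 k hk, h0 j k hj]

lemma psd_zero {a b c : ℝ} (ha : a = 0) (h : ∀ s : ℝ, 0 ≤ s ^ 2 * a + 2 * s * b + c) : b = 0 := by
  subst ha
  by_contra hb
  have := h (-(c + 1) / (2 * b))
  have e : 2 * (-(c + 1) / (2 * b)) * b = -(c + 1) := by field_simp
  rw [e] at this
  linarith

lemma quad_single {n : ℕ} {C : Matrix (Fin n) (Fin n) ℝ} (hC : C.IsSymm) (j k : Fin n) (s : ℝ) :
    (s • Pi.single j 1 + Pi.single k 1 : Fin n → ℝ) ⬝ᵥ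
      (C *ᵥ (s • Pi.single j 1 + Pi.single k 1)) =
      s ^ 2 * C j j + 2 * s * C j k + C k k := by
  have := hC.apply j k
  simp [Matrix.mulVec_add, Matrix.mulVec_smul]
  rw [this]
  ring

lemma ipM_vecMulVec {n : ℕ} (Y : Sym n) (x : Fin n → ℝ) :
    (Y.val * Matrix.vecMulVec x x).trace = x ⬝ᵥ (Y.val *ᵥ x) := by
  rw [Matrix.mul_vecMulVec, Matrix.trace_vecMulVec, dotProduct_comm]

lemma quad_vecMulVec {n : ℕ} (x u : Fin n → ℝ) :
    u ⬝ᵥ (Matrix.vecMulVec x x *ᵥ u) = (x ⬝ᵥ u) ^ 2 := by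
  rw [Matrix.vecMulVec_mulVec, dotProduct_smul, dotProduct_comm u x]
  simp; ring

lemma rep_of_le {n : ℕ} (X : Sym n) (i : Fin n) (Y : Sym n)
    (h : ∀ H : Sym n, ∃ u : Fin n → ℝ, u ⬝ᵥ u = 1 ∧ X.val *ᵥ u = eigval X.val i • u ∧
      ipM Y H ≤ u ⬝ᵥ (H.val *ᵥ u)) :
    ∃ U ∈ eigOrth X.val, ∃ z : Fin n → ℝ, (∀ j, 0 ≤ z j) ∧
      (∀ j, eigval X.val j ≠ eigval X.val i → z j = 0) ∧ (∑ j, z j) = 1 ∧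
      Y.val = U * Matrix.diagonal z * Uᵀ := by
  classical
  have hvs : ∀ x : Fin n → ℝ, Matrix.vecMulVec x x ∈ symSubmodule n := fun x => by
    show (Matrix.vecMulVec x x).IsSymm
    rw [Matrix.IsSymm, Matrix.transpose_vecMulVec]
  have hpsd : ∀ x : Fin n → ℝ, 0 ≤ x ⬝ᵥ (Y.val *ᵥ x) := by
    intro x
    obtain ⟨u, -, -, hu⟩ := h (-⟨Matrix.vecMulVec x x, hvs x⟩)
    have e1 : ipM Y (-⟨Matrix.vecMulVec x x, hvs x⟩) = -(x ⬝ᵥ (Y.val *ᵥ x)) := by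
      simp only [ipM, Submodule.coe_neg, Matrix.mul_neg, Matrix.trace_neg, ipM_vecMulVec]
    rw [e1, Submodule.coe_neg, Matrix.neg_mulVec, dotProduct_neg, quad_vecMulVec] at hu
    nlinarith [sq_nonneg (x ⬝ᵥ u)]
  have h1s : (1 : Matrix (Fin n) (Fin n) ℝ) ∈ symSubmodule n := by
    show (1 : Matrix (Fin n) (Fin n) ℝ).IsSymm
    exact Matrix.isSymm_one
  have htr : Y.val.trace = 1 := by
    apply le_antisymm
    · obtain ⟨u, hu1, -, hu⟩ := h ⟨1, h1s⟩
      simpa [ipM, hu1] using hu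
    · obtain ⟨u, hu1, -, hu⟩ := h (-⟨1, h1s⟩)
      simpa [ipM, hu1, Matrix.neg_mulVec] using hu
  obtain ⟨U₀, hU₀⟩ := exists_eigOrth X.2
  set C := U₀ᵀ * Y.val * U₀ with hC
  have hCs : C.IsSymm := by
    have hY : Y.valᵀ = Y.val := Y.2
    rw [hC, Matrix.IsSymm, Matrix.transpose_mul, Matrix.transpose_mul, Matrix.transpose_transpose,
      hY, Matrix.mul_assoc]
  have hCpsd : ∀ c : Fin n → ℝ, 0 ≤ c ⬝ᵥ (C *ᵥ c) := fun c => by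
    rw [hC, ← conj_quad]; exact hpsd _
  have hjj : ∀ j, eigval X.val j ≠ eigval X.val i → C j j = 0 := by
    intro j hj
    have e0 : C j j = (U₀ *ᵥ Pi.single j 1) ⬝ᵥ (Y.val *ᵥ (U₀ *ᵥ Pi.single j 1)) := by
      rw [conj_quad, ← hC]; simp
    apply le_antisymm
    · obtain ⟨u, -, hu2, hu⟩ := h ⟨Matrix.vecMulVec (U₀ *ᵥ Pi.single j 1)
        (U₀ *ᵥ Pi.single j 1), hvs _⟩
      have e1 : ipM Y ⟨Matrix.vecMulVec (U₀ *ᵥ Pi.single j 1) (U₀ *ᵥ Pi.single j 1), hvs _⟩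
          = C j j := by
        rw [e0, ← ipM_vecMulVec]; rfl
      have e2 : (U₀ *ᵥ Pi.single j 1) ⬝ᵥ u = 0 := by
        rw [← dot_conj hU₀.1, Matrix.mulVec_mulVec, eigOrth_mul hU₀, Matrix.one_mulVec,
          single_dotProduct, coeff_zero hU₀ hu2 hj, mul_zero]
      rw [e1] at hu
      simp only [quad_vecMulVec, e2] at hu
      simpa using hu
    · rw [e0]; exact hpsd _
  have hjk : ∀ j k, ¬ (eigval X.val j = eigval X.val i) → C j k = 0 := fun j k hj =>
    psd_zero (hjj j hj) fun s => by
      rw [← quad_single hCs]; exact hCpsd _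
  obtain ⟨W, z, hWW, hWd, hz0, hCW⟩ := diag_extend (fun j => eigval X.val j = eigval X.val i) C hCs
    hjk (eigval X.val) (eigval X.val i) (fun j hj => hj)
  have hUU : (U₀ * W) * (U₀ * W)ᵀ = 1 := by
    rw [Matrix.transpose_mul, Matrix.mul_assoc, ← Matrix.mul_assoc W, hWW, Matrix.one_mul, hU₀.1]
  have hYU : Y.val = U₀ * W * Matrix.diagonal z * (U₀ * W)ᵀ := by
    have : U₀ * W * Matrix.diagonal z * (U₀ * W)ᵀ = U₀ * (W * Matrix.diagonal z * Wᵀ) * U₀ᵀ := by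
      simp only [Matrix.transpose_mul, Matrix.mul_assoc]
    rw [this, ← hCW, hC]
    have : U₀ * (U₀ᵀ * Y.val * U₀) * U₀ᵀ = (U₀ * U₀ᵀ) * Y.val * (U₀ * U₀ᵀ) := by
      simp only [Matrix.mul_assoc]
    rw [this, hU₀.1, Matrix.one_mul, Matrix.mul_one]
  have hUU' : (U₀ * W)ᵀ * (U₀ * W) = 1 := mul_eq_one_comm.mp hUU
  refine ⟨U₀ * W, ⟨hUU, ?_⟩, z, ?_, hz0, ?_, hYU⟩
  · have : U₀ * W * Matrix.diagonal (eigval X.val) * (U₀ * W)ᵀ =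
        U₀ * (W * Matrix.diagonal (eigval X.val) * Wᵀ) * U₀ᵀ := by
      simp only [Matrix.transpose_mul, Matrix.mul_assoc]
    rw [this, hWd]
    exact hU₀.2
  · intro j
    have h1 := hpsd ((U₀ * W) *ᵥ Pi.single j 1)
    rw [conj_quad] at h1
    have h2 : (U₀ * W)ᵀ * Y.val * (U₀ * W) = Matrix.diagonal z := by
      rw [hYU]
      have : (U₀ * W)ᵀ * (U₀ * W * Matrix.diagonal z * (U₀ * W)ᵀ) * (U₀ * W) =
          ((U₀ * W)ᵀ * (U₀ * W)) * Matrix.diagonal z * ((U₀ * W)ᵀ * (U₀ * W)) := by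
        simp only [Matrix.mul_assoc]
      rw [this, hUU', Matrix.one_mul, Matrix.mul_one]
    rw [h2] at h1
    simpa using h1
  · have h1 := htr
    rw [hYU, Matrix.trace_mul_comm, ← Matrix.mul_assoc, hUU', Matrix.one_mul,
      Matrix.trace_diagonal] at h1
    exact h1

/-- Trace pairing with a spectral representation. -/
lemma ipM_rep {n : ℕ} (Y H : Sym n) (U : Matrix (Fin n) (Fin n) ℝ) (z : Fin n → ℝ)
    (hY : Y.val = U * Matrix.diagonal z * Uᵀ) :
    ipM Y H = ∑ j, z j * ((U *ᵥ Pi.single j 1) ⬝ᵥ (H.val *ᵥ (U *ᵥ Pi.single j 1))) := by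
  have h1 : ipM Y H = (Matrix.diagonal z * (Uᵀ * H.val * U)).trace := by
    unfold ipM
    rw [hY]
    have : U * Matrix.diagonal z * Uᵀ * H.val = U * (Matrix.diagonal z * Uᵀ * H.val) := by
      simp only [Matrix.mul_assoc]
    rw [this, Matrix.trace_mul_comm]
    simp only [Matrix.mul_assoc]
  rw [h1]
  simp only [Matrix.trace, Matrix.diag_apply, Matrix.diagonal_mul]
  refine Finset.sum_congr rfl fun j _ => ?_
  rw [conj_quad]
  simp

/-- Corollary 5.2: first-order properties of a leading eigenvalue function. -/
theorem leading_eigenvalue_first_order {n : ℕ} (X : Sym n) (i : Fin n)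
    (hlead : ∀ j : Fin n, j < i → eigval X.val i < eigval X.val j) :
    -- (a) subderivative formula and one-sided directional derivative
    (∀ U ∈ eigOrth X.val, ∀ H : Sym n,
      subderiv (fun A : Sym n => ((eigval A.val i : ℝ) : EReal)) X H =
        ((eigval (blockMat X.val (Uᵀ * H.val * U) i)
            ⟨0, Finset.card_pos.mpr ⟨i, mem_blockSet_self X.val i⟩⟩ : ℝ) : EReal) ∧
      Tendsto (fun t : ℝ => t⁻¹ * (eigval (X.val + t • H.val) i - eigval X.val i))
        (nhdsWithin (0 : ℝ) (Set.Ioi 0))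
        (nhds (eigval (blockMat X.val (Uᵀ * H.val * U) i)
          ⟨0, Finset.card_pos.mpr ⟨i, mem_blockSet_self X.val i⟩⟩))) ∧
    -- (b) subdifferential regularity
    SubdiffRegularAt ipM (fun A : Sym n => ((eigval A.val i : ℝ) : EReal)) X ∧
    -- (c) subdifferential formula
    (∀ Y : Sym n,
      LimSubgrad ipM (fun A : Sym n => ((eigval A.val i : ℝ) : EReal)) X Y ↔
        ∃ U ∈ eigOrth X.val, ∃ z : Fin n → ℝ, (∀ j, 0 ≤ z j) ∧
          (∀ j, eigval X.val j ≠ eigval X.val i → z j = 0) ∧ (∑ j, z j) = 1 ∧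
          Y.val = U * Matrix.diagonal z * Uᵀ) := by
  have hk : 0 < (blockSet X.val i).card :=
    Finset.card_pos.mpr ⟨i, mem_blockSet_self X.val i⟩
  have hsemi : ∀ U ∈ eigOrth X.val, ∀ H : Sym n, Tendsto
      (fun p : ℝ × Sym n => p.1⁻¹ * (eigval (X + p.1 • p.2).val i - eigval X.val i))
      ((𝓝[>] (0 : ℝ)) ×ˢ 𝓝 H) (𝓝 (eigval (blockMat X.val (Uᵀ * H.val * U) i) ⟨0, hk⟩)) := by
    intro U hU H
    obtain ⟨h1, h2⟩ := block_deriv X i hU H hk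
    exact semideriv X i hlead H _ h1 h2
  have hdir : ∀ U ∈ eigOrth X.val, ∀ H : Sym n, Tendsto
      (fun t : ℝ => t⁻¹ * (eigval (X.val + t • H.val) i - eigval X.val i))
      (𝓝[>] (0 : ℝ)) (𝓝 (eigval (blockMat X.val (Uᵀ * H.val * U) i) ⟨0, hk⟩)) := by
    intro U hU H
    exact (hsemi U hU H).comp (tendsto_id.prodMk tendsto_const_nhds)
  refine ⟨fun U hU H => ⟨?_, hdir U hU H⟩, regular_at X i hlead, fun Y => ⟨?_, ?_⟩⟩
  · unfold subderiv
    have hc := (continuous_coe_real_ereal.tendsto _).comp (hsemi U hU H)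
    rw [← hc.liminf_eq]
    congr 1
  · rintro ⟨xs, vs, hreg, hx, hv, -⟩
    obtain ⟨V, hV, r, hr, hconv, hsup⟩ := local_support X i hlead
    have hXV : X ∈ V := mem_of_mem_nhds hV
    have hquad : ∀ Z ∈ V,
        eigval X.val i + ipM Y (Z - X) - r * ipM (Z - X) (Z - X) ≤ eigval Z.val i := by
      intro Z hZ
      have hlim : Tendsto (fun k => eigval (xs k).val i + ipM (vs k) (Z - xs k)
          - r * ipM (Z - xs k) (Z - xs k)) atTop
          (𝓝 (eigval X.val i + ipM Y (Z - X) - r * ipM (Z - X) (Z - X))) := by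
        have hs : Tendsto (fun k => Z - xs k) atTop (𝓝 (Z - X)) := hx.const_sub Z
        have a0 := ((continuous_eig i).tendsto X).comp hx
        have a1 := (continuous_ipM.tendsto (Y, Z - X)).comp (hv.prodMk_nhds hs)
        have a2 := (continuous_ipM.tendsto (Z - X, Z - X)).comp (hs.prodMk_nhds hs)
        exact (a0.add a1).sub (a2.const_mul r)
      refine le_of_tendsto hlim ?_
      filter_upwards [hx hV] with k hkV
      exact quad_of_regSubgrad hr hconv hsup hkV hZ (hreg k)
    refine rep_of_le X i Y fun H => ?_
    obtain ⟨U, hU⟩ := exists_eigOrth X.2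
    obtain ⟨u, hu1, hu2, hu3⟩ := (block_deriv X i hU H hk).2
    refine ⟨u, hu1, hu2, ?_⟩
    rw [hu3]
    have hl : Tendsto (fun t : ℝ => ipM Y H - t * (r * ipM H H)) (𝓝[>] 0) (𝓝 (ipM Y H)) := by
      have hc : Continuous fun t : ℝ => ipM Y H - t * (r * ipM H H) := by fun_prop
      have h := (hc.tendsto 0).mono_left (nhdsWithin_le_nhds (s := Set.Ioi 0))
      simpa using h
    refine le_of_tendsto_of_tendsto hl (hdir U hU H) ?_
    have hXt : Tendsto (fun t : ℝ => X + t • H) (𝓝[>] 0) (𝓝 X) := by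
      have hc : Continuous fun t : ℝ => X + t • H := by fun_prop
      have h := (hc.tendsto 0).mono_left (nhdsWithin_le_nhds (s := Set.Ioi 0))
      simpa using h
    filter_upwards [hXt hV, self_mem_nhdsWithin] with t ht ht0
    have ht0' : (0 : ℝ) < t := ht0
    have h1 := hquad _ ht
    rw [add_sub_cancel_left, ipM_smul_self, ipM_smul_right] at h1
    have e : (X + t • H).val = X.val + t • H.val := rfl
    rw [e] at h1
    rw [inv_mul_eq_div, le_div_iff₀ ht0']
    linarith
  · rintro ⟨U, hU, z, hz, hz0, hz1, hY⟩
    obtain ⟨V, hV, r, hr, hconv, hsup⟩ := local_support X i hlead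
    have hXV : X ∈ V := mem_of_mem_nhds hV
    refine ⟨fun _ => X, fun _ => Y, fun _ => ?_, tendsto_const_nhds, tendsto_const_nhds,
      tendsto_const_nhds⟩
    refine regSubgrad_of_quad (fun A : Sym n => eigval A.val i) X Y r ?_
    filter_upwards [hV] with Z hZ
    rw [ipM_rep Y (Z - X) U z hY]
    have h1 : ∀ j, z j * ((U *ᵥ Pi.single j 1) ⬝ᵥ ((Z - X).val *ᵥ (U *ᵥ Pi.single j 1))) ≤
        z j * (eigval Z.val i - eigval X.val i + r * ipM (Z - X) (Z - X)) := by
      intro j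
      by_cases hj : eigval X.val j = eigval X.val i
      · refine mul_le_mul_of_nonneg_left ?_ (hz j)
        have := hsup X hXV Z hZ (U *ᵥ Pi.single j 1) (by rw [dot_conj' hU.1]; simp)
          (eigvec_of_supp hU fun k hk' => by
            have : k ≠ j := by rintro rfl; exact hk' hj
            simp [this])
        linarith
      · rw [hz0 j hj]; simp
    have h2 := Finset.sum_le_sum fun j (_ : j ∈ Finset.univ) => h1 j
    rw [← Finset.sum_mul, hz1, one_mul] at h2
    linarith


end SpecPaper
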